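/- arXiv:2510.15807 — 2 statements merged into one kernel-verified Lean document; each statement's English description precedes it below -/
import Mathlib

section
/- For every integer n ≥ 0 the variance of the area of the random convex chain satisfies var(vol(T_n)) = (7n² + 24n + 14)·H_{n+1}/(27(n+1)²(n+2)²) − H_{n+1}²/(9(n+1)²(n+2)) + H^{(2)}_{n+1}/(9(n+1)(n+2)) − (55n⁴ + 391n³ + 962n² + 956n + 336)/(108(n+1)²(n+2)³(n+3)). -/
open MeasureTheory

noncomputable section

/-- The triangle with vertices (0,0), (1,0), (0,1). -/
def T : Set (ℝ × ℝ) := convexHull ℝ {(0, 0), (1, 0), (0, 1)}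

/-- The uniform distribution on `T`: twice Lebesgue measure restricted to `T`. -/
def μT : Measure (ℝ × ℝ) := (2 : ENNReal) • (volume.restrict T)

/-- Joint law of `n` independent uniform points in `T`. -/
def P (n : ℕ) : Measure (Fin n → ℝ × ℝ) := Measure.pi fun _ => μT

/-- The random convex chain: convex hull of the points together with `(1,0)` and `(0,1)`. -/
def Tchain (n : ℕ) (ω : Fin n → ℝ × ℝ) : Set (ℝ × ℝ) :=
  convexHull ℝ (Set.range ω ∪ {(1, 0), (0, 1)})

/-- Normalized area `V_n = 2 vol(T_n)`. -/
def V (n : ℕ) (ω : Fin n → ℝ × ℝ) : ℝ := 2 * (volume (Tchain n ω)).toReal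

/-- Number of vertices of `T_n` other than the two corners. -/
def N (n : ℕ) (ω : Fin n → ℝ × ℝ) : ℕ :=
  (Set.extremePoints ℝ (Tchain n ω)).ncard - 2

/-- Normalized moments `q_{n,k} = C(n+k,k) E[V_n^k]`. -/
def q (n k : ℕ) : ℝ := ((n + k).choose k : ℝ) * ∫ ω, (V n ω) ^ k ∂ P n

/-- Probability generating function of `N_n`. -/
def G (n : ℕ) (t : ℝ) : ℝ := ∫ ω, t ^ (N n ω) ∂ P n

/-- Harmonic number. -/
def H (j : ℕ) : ℝ := ∑ i ∈ Finset.range j, 1 / ((i : ℝ) + 1)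

/-- Generalized harmonic number of order 2. -/
def H2 (j : ℕ) : ℝ := ∑ i ∈ Finset.range j, 1 / ((i : ℝ) + 1) ^ 2

/-- `c(k,ℓ)`: elementary symmetric polynomial `e_k` of `2/(j(j+1))`, `j = 1,…,ℓ`. -/
def c (k l : ℕ) : ℝ :=
  ∑ S ∈ (Finset.Icc 1 l).powersetCard k, ∏ j ∈ S, 2 / ((j : ℝ) * ((j : ℝ) + 1))

open Set
open scoped ENNReal Nat

/-!
Among the points of the sample take the one, `z = (r * p, 1 - r)`, for which the line through
`(0, 1)` meets the horizontal axis furthest to the left, at `(p, 0)`; it is the vertex of the chain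
adjacent to `(0, 1)`. All other points lie in the triangle with vertices `(0, 1)`, `(p, 0)`,
`(1, 0)`, which `z` cuts into two: those in the triangle with vertices `(0, 1)`, `z`, `(1, 0)` do
not contribute to the chain, and those in the triangle with vertices `(p, 0)`, `z`, `(1, 0)` are
uniform in an affine image of `T`. Given `z` and the number `m` of points of the second kind, the
normalized area is therefore distributed as `r * (1 - p) + (1 - r) * (1 - p) * V m`. Expanding
powers and integrating `r` and `p` out by Beta integrals expresses `q n k` through the `q m j` with
`m < n` and `j ≤ k`. For `k = 1` and `k = 2`, taking second differences in `n` turns this into a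
second-order difference equation, whose solution is a polynomial in harmonic numbers with
rational functions of `n` as coefficients.
-/

section Convexity

lemma convexHull_insert_of_mem {𝕜 E : Type*} [Semiring 𝕜] [PartialOrder 𝕜] [AddCommMonoid E]
    [Module 𝕜 E] {x : E} {s : Set E} (hx : x ∈ convexHull 𝕜 s) :
    convexHull 𝕜 (insert x s) = convexHull 𝕜 s :=
  (convexHull_min (insert_subset hx (subset_convexHull 𝕜 s)) (convex_convexHull 𝕜 s)).antisymm
    (convexHull_mono (subset_insert x s))

variable {𝕜 E : Type*} [Field 𝕜] [LinearOrder 𝕜] [IsStrictOrderedRing 𝕜] [AddCommGroup E]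
  [Module 𝕜 E] {o w z e : E} {s : Set E}

lemma segment_subset_segment_union_segment {x y z : E} (hy : y ∈ segment 𝕜 x z) :
    segment 𝕜 x z ⊆ segment 𝕜 x y ∪ segment 𝕜 y z := by
  rw [segment_eq_image_lineMap] at hy ⊢
  rintro _ ⟨u, hu, rfl⟩
  obtain ⟨t, -, rfl⟩ := hy
  simp only [mem_union, mem_segment_iff_wbtw]
  refine (le_total u t).imp (fun h ↦ ?_) fun h ↦ ?_
  · simpa using (Wbtw.of_le_of_le hu.1 h).map (AffineMap.lineMap x z)
  · simpa using (Wbtw.of_le_of_le h hu.2).map (AffineMap.lineMap x z)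

lemma exists_mem_segment_inter_segment {y : E} (hz : z ∈ segment 𝕜 w o)
    (hy : y ∈ convexHull 𝕜 {w, z, e}) : ∃ x ∈ segment 𝕜 z e, x ∈ segment 𝕜 o y := by
  rw [show ({w, z, e} : Set E) = {e, w, z} by grind, convexHull_insert (by simp),
    convexHull_pair, convexJoin_singleton_left] at hy
  obtain ⟨y', hy', hy⟩ := mem_iUnion₂.1 hy
  have hzy' : z ∈ segment 𝕜 y' o := by
    rw [mem_segment_iff_wbtw] at hz hy' ⊢
    exact hz.trans_left_right hy'
  have hmeet := not_disjoint_segment_convexHull_triple hzy' (segment_symm 𝕜 e y' ▸ hy)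
    (left_mem_segment 𝕜 o e)
  rw [insert_idem, convexHull_pair, segment_symm 𝕜 e z, segment_symm 𝕜 y o,
    not_disjoint_iff] at hmeet
  obtain ⟨x, hxy, hxe⟩ := hmeet
  exact ⟨x, hxe, hxy⟩

theorem convexHull_insert_eq_triangle_union (hz : z ∈ segment 𝕜 w o) (hzs : z ∈ s) (hes : e ∈ s)
    (hs : s ⊆ convexHull 𝕜 {w, z, e}) :
    convexHull 𝕜 (insert o s) = convexHull 𝕜 {o, z, e} ∪ convexHull 𝕜 s := by
  refine Subset.antisymm ?_ (union_subset (convexHull_mono (by grind))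
    (convexHull_mono (subset_insert o s)))
  rw [convexHull_insert ⟨z, hzs⟩, convexJoin_singleton_left]
  refine iUnion₂_subset fun c hc ↦ ?_
  obtain ⟨x, hxze, hxoc⟩ := exists_mem_segment_inter_segment hz
    (convexHull_min hs (convex_convexHull 𝕜 _) hc)
  refine (segment_subset_segment_union_segment hxoc).trans (union_subset_union ?_ ?_)
  · rw [convexHull_insert (insert_nonempty z _), convexHull_pair, convexJoin_singleton_left]
    exact subset_biUnion_of_mem hxze
  · exact (convex_convexHull 𝕜 s).segment_subset (segment_subset_convexHull hzs hes hxze) hc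

theorem convexHull_triangle_eq_union (hz : z ∈ segment 𝕜 w o) :
    convexHull 𝕜 {o, w, e} = convexHull 𝕜 {o, z, e} ∪ convexHull 𝕜 {w, z, e} := by
  rw [← convexHull_insert_eq_triangle_union hz (by simp) (by simp) (subset_convexHull 𝕜 _)]
  refine Subset.antisymm (convexHull_mono (by grind)) (convexHull_min ?_ (convex_convexHull 𝕜 _))
  have hzow : z ∈ convexHull 𝕜 {o, w, e} := segment_subset_convexHull (by simp) (by simp) hz
  have := subset_convexHull 𝕜 {o, w, e}
  grind

end Convexity

section Sampling

variable {E : Type*} [MeasurableSpace E]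

-- `Fin.range_insertNth` is stated with the bare function `Set.insert`, on which the lemmas about
-- `insert` do not fire.
lemma range_insertNth {α : Type*} {k : ℕ} (i : Fin (k + 1)) (x : α) (ω : Fin k → α) :
    range (i.insertNth x ω : Fin (k + 1) → α) = insert x (range ω) :=
  Fin.range_insertNth i x ω

lemma lintegral_pi_eq_lintegral_insertNth {k : ℕ} (ν : Measure E) [SigmaFinite ν] (i : Fin (k + 1))
    {F : (Fin (k + 1) → E) → ℝ≥0∞} (hF : Measurable F) :
    ∫⁻ ω, F ω ∂(Measure.pi fun _ ↦ ν) =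
      ∫⁻ x, ∫⁻ ω, F (i.insertNth x ω) ∂(Measure.pi fun _ : Fin k ↦ ν) ∂ν := by
  have hmp := (measurePreserving_piFinSuccAbove (fun _ : Fin (k + 1) ↦ ν) i).symm
  rw [← hmp.lintegral_comp hF, lintegral_prod]
  · rfl
  · exact (hF.comp (MeasurableEquiv.measurable _)).aemeasurable

lemma pi_smul_const (a : NNReal) (ν : Measure E) [SigmaFinite ν] (m : ℕ) :
    (Measure.pi fun _ : Fin m ↦ a • ν) = (a : ℝ≥0∞) ^ m • Measure.pi fun _ : Fin m ↦ ν :=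
  Measure.pi_eq fun s _ ↦ by
    simp only [Measure.smul_apply, Measure.pi_pi, ENNReal.smul_def, smul_eq_mul,
      Finset.prod_mul_distrib, Finset.prod_const, Finset.card_univ, Fintype.card_fin]

variable {g : Set E → ℝ≥0∞}

lemma measurable_insert_range (hg : ∀ m, Measurable fun ω : Fin m → E ↦ g (range ω)) (m : ℕ) :
    Measurable fun t : E × (Fin m → E) ↦ g (insert t.1 (range t.2)) := by
  have hcomp : Measurable fun t : E × (Fin m → E) ↦
      g (range (Fin.insertNth 0 t.1 t.2 : Fin (m + 1) → E)) :=
    (hg (m + 1)).comp (MeasurableEquiv.piFinSuccAbove (fun _ ↦ E) 0).symm.measurable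
  simpa only [range_insertNth] using hcomp

lemma measurable_insert_const_range (hg : ∀ m, Measurable fun ω : Fin m → E ↦ g (range ω)) (x : E)
    (m : ℕ) : Measurable fun ω : Fin m → E ↦ g (insert x (range ω)) :=
  (measurable_insert_range hg m).comp measurable_prodMk_left

lemma lintegral_pi_succ (ν : Measure E) [SigmaFinite ν]
    (hg : ∀ m, Measurable fun ω : Fin m → E ↦ g (range ω)) (k : ℕ) :
    ∫⁻ ω, g (range ω) ∂(Measure.pi fun _ : Fin (k + 1) ↦ ν) =
      ∫⁻ x, ∫⁻ ω, g (insert x (range ω)) ∂(Measure.pi fun _ : Fin k ↦ ν) ∂ν := by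
  simp only [lintegral_pi_eq_lintegral_insertNth ν 0 (hg _), range_insertNth]

theorem lintegral_pi_add_of_insert_ae (α β : Measure E) [SigmaFinite α] [SigmaFinite β]
    (hg : ∀ m, Measurable fun ω : Fin m → E ↦ g (range ω))
    (hβ : ∀ᵐ x ∂β, ∀ s, g (insert x s) = g s) (k : ℕ) :
    ∫⁻ ω, g (range ω) ∂(Measure.pi fun _ : Fin k ↦ α + β) =
      ∑ m ∈ Finset.range (k + 1), (k.choose m : ℝ≥0∞) *
        (β univ ^ (k - m) * ∫⁻ ω, g (range ω) ∂(Measure.pi fun _ : Fin m ↦ α)) := by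
  induction k generalizing g with
  | zero => simp
  | succ k ih =>
    have hgx := measurable_insert_range hg
    have hmeas (m : ℕ) : Measurable fun x ↦
        ∫⁻ ω, g (insert x (range ω)) ∂(Measure.pi fun _ : Fin m ↦ α) :=
      (hgx m).lintegral_prod_right'
    have hstep (x : E) := ih (g := fun s ↦ g (insert x s))
      (measurable_insert_const_range hg x)
      (hβ.mono fun y hy s ↦ by rw [insert_comm, hy])
    have hα : ∫⁻ x, ∫⁻ ω, g (insert x (range ω)) ∂(Measure.pi fun _ : Fin k ↦ α + β) ∂α =
        ∑ m ∈ Finset.range (k + 1), (k.choose m : ℝ≥0∞) * (β univ ^ (k - m) *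
          ∫⁻ ω, g (range ω) ∂(Measure.pi fun _ : Fin (m + 1) ↦ α)) := by
      simp only [hstep]
      rw [lintegral_finsetSum _ fun m _ ↦ ((hmeas m).const_mul _).const_mul _]
      simp only [lintegral_const_mul _ ((hmeas _).const_mul _), lintegral_const_mul _ (hmeas _),
        lintegral_pi_succ α hg]
    have hβ' : ∫⁻ x, ∫⁻ ω, g (insert x (range ω)) ∂(Measure.pi fun _ : Fin k ↦ α + β) ∂β =
        ∑ m ∈ Finset.range (k + 1), (k.choose m : ℝ≥0∞) * (β univ ^ (k + 1 - m) *
          ∫⁻ ω, g (range ω) ∂(Measure.pi fun _ : Fin m ↦ α)) := by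
      have hins : ∀ᵐ x ∂β, ∫⁻ ω, g (insert x (range ω)) ∂(Measure.pi fun _ : Fin k ↦ α + β) =
          ∫⁻ ω, g (range ω) ∂(Measure.pi fun _ : Fin k ↦ α + β) :=
        hβ.mono fun x hx ↦ by simp only [hx]
      rw [lintegral_congr_ae hins, lintegral_const, ih hg hβ, Finset.sum_mul]
      refine Finset.sum_congr rfl fun m hm ↦ ?_
      rw [Nat.sub_add_comm (Finset.mem_range_succ_iff.1 hm), pow_succ]
      ring
    rw [lintegral_pi_succ _ hg, lintegral_add_measure, hα, hβ', add_comm,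
      Finset.sum_choose_succ_mul fun m j ↦
        β univ ^ j * ∫⁻ ω, g (range ω) ∂(Measure.pi fun _ : Fin m ↦ α)]

lemma ae_pi_comp_ne_comp (ν : Measure E) [SigmaFinite ν] {s : E → ℝ} (hs : Measurable s)
    (hν : ∀ c, ν {x | s x = c} = 0) {k : ℕ} (i : Fin (k + 1)) (j : Fin k) :
    ∀ᵐ ω ∂(Measure.pi fun _ : Fin (k + 1) ↦ ν), s (ω i) ≠ s (ω (i.succAbove j)) := by
  have hmp := (measurePreserving_piFinSuccAbove (fun _ : Fin (k + 1) ↦ ν) i).symm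
  have hmeas : MeasurableSet {ω : Fin (k + 1) → E | s (ω i) ≠ s (ω (i.succAbove j))} :=
    (measurableSet_eq_fun (hs.comp (measurable_pi_apply _))
      (hs.comp (measurable_pi_apply _))).compl
  rw [← hmp.map_eq, ae_map_iff hmp.aemeasurable hmeas]
  refine (Measure.ae_prod_iff_ae_ae (hmp.measurable hmeas)).2 (.of_forall fun x ↦ ?_)
  have hne : ∀ᵐ y ∂ν, s x ≠ s y := by
    rw [ae_iff]
    simpa [eq_comm] using hν (s x)
  filter_upwards [Measure.tendsto_eval_ae_ae (μ := fun _ : Fin k ↦ ν) (i := j) hne] with ω hω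
  change s ((i.insertNth x ω : Fin (k + 1) → E) i) ≠
    s ((i.insertNth x ω : Fin (k + 1) → E) (i.succAbove j))
  rw [Fin.insertNth_apply_same, Fin.insertNth_apply_succAbove]
  exact hω

/-- The event that `s` takes its minimum over the sample `ω` at the point `ω i`. -/
def minimizerAt {k : ℕ} (s : E → ℝ) (i : Fin (k + 1)) : Set (Fin (k + 1) → E) :=
  {ω | ∀ j, s (ω i) ≤ s (ω (i.succAbove j))}

lemma measurableSet_minimizerAt {k : ℕ} {s : E → ℝ} (hs : Measurable s) (i : Fin (k + 1)) :
    MeasurableSet (minimizerAt s i) := by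
  simp only [minimizerAt, ofPred_forall]
  exact .iInter fun j ↦ measurableSet_le (hs.comp (measurable_pi_apply _))
    (hs.comp (measurable_pi_apply _))

lemma ae_eq_sum_indicator_minimizerAt (ν : Measure E) [SigmaFinite ν] {s : E → ℝ}
    (hs : Measurable s) (hν : ∀ c, ν {x | s x = c} = 0) {k : ℕ} (F : (Fin (k + 1) → E) → ℝ≥0∞) :
    ∀ᵐ ω ∂(Measure.pi fun _ : Fin (k + 1) ↦ ν), F ω = ∑ i, (minimizerAt s i).indicator F ω := by
  have hne := ae_all_iff.2 fun i : Fin (k + 1) ↦ ae_all_iff.2 (ae_pi_comp_ne_comp ν hs hν i)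
  filter_upwards [hne] with ω hne
  obtain ⟨i, hi⟩ := Finite.exists_min (s ∘ ω)
  have hmem : ω ∈ minimizerAt s i := fun j ↦ hi _
  rw [Finset.sum_eq_single_of_mem i (Finset.mem_univ i), indicator_of_mem hmem]
  intro l _ hli
  obtain ⟨j, rfl⟩ := Fin.exists_succAbove_eq hli.symm
  exact indicator_of_notMem (fun hl : ω ∈ minimizerAt s l ↦ hne l j ((hl j).antisymm (hi l))) F

lemma lintegral_indicator_minimizerAt_insertNth (ν : Measure E) [SigmaFinite ν] {s : E → ℝ}
    (hs : Measurable s) {k : ℕ} (i : Fin (k + 1)) (x : E) :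
    ∫⁻ ω, (minimizerAt s i).indicator (fun ω ↦ g (range ω)) (i.insertNth x ω)
        ∂(Measure.pi fun _ ↦ ν) =
      ∫⁻ ω, g (insert x (range ω)) ∂(Measure.pi fun _ : Fin k ↦ ν.restrict {y | s x ≤ s y}) := by
  rw [← Measure.restrict_pi_pi, ← lintegral_indicator
    (.univ_pi fun _ ↦ measurableSet_le measurable_const hs)]
  refine lintegral_congr fun ω ↦ ?_
  simp only [indicator, minimizerAt, mem_ofPred_eq, mem_univ_pi, Fin.insertNth_apply_same,
    Fin.insertNth_apply_succAbove, range_insertNth]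

lemma measurable_lintegral_pi_restrict (ν : Measure E) [SigmaFinite ν] {s : E → ℝ}
    (hs : Measurable s) (hg : ∀ m, Measurable fun ω : Fin m → E ↦ g (range ω)) (k : ℕ) :
    Measurable fun x ↦ ∫⁻ ω, g (insert x (range ω))
      ∂(Measure.pi fun _ : Fin k ↦ ν.restrict {y | s x ≤ s y}) := by
  have hmeas : Measurable fun t : E × (Fin k → E) ↦
      (minimizerAt s 0).indicator (fun ω ↦ g (range ω)) (Fin.insertNth 0 t.1 t.2) :=
    ((hg _).indicator (measurableSet_minimizerAt hs 0)).comp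
      (MeasurableEquiv.piFinSuccAbove (fun _ ↦ E) 0).symm.measurable
  have hint := hmeas.lintegral_prod_right' (ν := Measure.pi fun _ : Fin k ↦ ν)
  convert hint using 2 with x
  exact (lintegral_indicator_minimizerAt_insertNth ν hs 0 x).symm

theorem lintegral_pi_succ_eq_mul_lintegral_restrict (ν : Measure E) [SigmaFinite ν] {s : E → ℝ}
    (hs : Measurable s) (hν : ∀ c, ν {x | s x = c} = 0)
    (hg : ∀ m, Measurable fun ω : Fin m → E ↦ g (range ω)) (k : ℕ) :
    ∫⁻ ω, g (range ω) ∂(Measure.pi fun _ : Fin (k + 1) ↦ ν) =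
      (k + 1) * ∫⁻ x, ∫⁻ ω, g (insert x (range ω))
        ∂(Measure.pi fun _ : Fin k ↦ ν.restrict {y | s x ≤ s y}) ∂ν := by
  rw [lintegral_congr_ae (ae_eq_sum_indicator_minimizerAt ν hs hν _),
    lintegral_finsetSum _ fun i _ ↦ (hg _).indicator (measurableSet_minimizerAt hs i)]
  have hsum (i : Fin (k + 1)) := lintegral_pi_eq_lintegral_insertNth ν i
    ((hg _).indicator (measurableSet_minimizerAt hs i))
  simp only [hsum, lintegral_indicator_minimizerAt_insertNth ν hs, Finset.sum_const,
    Finset.card_univ, Fintype.card_fin, nsmul_eq_mul, Nat.cast_add, Nat.cast_one]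

end Sampling

section Measurability

lemma convexHull_range_eq_image_stdSimplex {ι 𝕜 E : Type*} [Fintype ι] [Field 𝕜] [LinearOrder 𝕜]
    [IsStrictOrderedRing 𝕜] [AddCommGroup E] [Module 𝕜 E] (v : ι → E) :
    convexHull 𝕜 (range v) = Fintype.linearCombination 𝕜 v '' stdSimplex 𝕜 ι := by
  classical
  rw [← convexHull_basis_eq_stdSimplex, LinearMap.image_convexHull, ← range_comp]
  congr 2
  ext i
  simp [Fintype.linearCombination_apply]

lemma isClosed_setOf_mem_convexHull_range {ι E : Type*} [Finite ι] [TopologicalSpace E]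
    [T2Space E] [AddCommGroup E] [Module ℝ E] [ContinuousAdd E] [ContinuousSMul ℝ E] :
    IsClosed {t : (ι → E) × E | t.2 ∈ convexHull ℝ (range t.1)} := by
  have := Fintype.ofFinite ι
  have hgraph : IsClosed {t : ((ι → E) × E) × stdSimplex ℝ ι |
      Fintype.linearCombination ℝ t.1.1 t.2 = t.1.2} := by
    simp only [Fintype.linearCombination_apply]
    refine isClosed_eq ?_ (by fun_prop)
    refine continuous_finsetSum _ fun i _ ↦ ?_
    exact ((continuous_apply i).comp (continuous_subtype_val.comp continuous_snd)).smul
      ((continuous_apply i).comp (continuous_fst.comp continuous_fst))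
  convert isClosedMap_fst_of_compactSpace _ hgraph using 1
  ext t
  simp only [convexHull_range_eq_image_stdSimplex, mem_ofPred_eq, mem_image, Prod.exists,
    exists_and_right, exists_eq_right]
  exact ⟨fun ⟨w, hw, h⟩ ↦ ⟨⟨w, hw⟩, h⟩, fun ⟨w, h⟩ ↦ ⟨w, w.2, h⟩⟩

lemma measurable_measure_convexHull_range {ι E : Type*} [Finite ι] [TopologicalSpace E]
    [T2Space E] [SecondCountableTopology E] [MeasurableSpace E] [BorelSpace E] [AddCommGroup E]
    [Module ℝ E] [ContinuousAdd E] [ContinuousSMul ℝ E] (μ : Measure E) [SFinite μ] :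
    Measurable fun v : ι → E ↦ μ (convexHull ℝ (range v)) :=
  measurable_measure_prodMk_left isClosed_setOf_mem_convexHull_range.measurableSet

lemma measurableSet_convexHull_of_finite {E : Type*} [TopologicalSpace E] [T2Space E]
    [MeasurableSpace E] [OpensMeasurableSpace E] [AddCommGroup E] [Module ℝ E]
    [IsTopologicalAddGroup E] [ContinuousSMul ℝ E] {s : Set E} (hs : s.Finite) :
    MeasurableSet (convexHull ℝ s) :=
  (hs.isClosed_convexHull ℝ).measurableSet

end Measurability

section Integrals

lemma lintegral_eq_ofReal_mul_lintegral_comp_mul_left {g : ℝ → ℝ≥0∞} (hg : Measurable g) {r : ℝ}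
    (hr : 0 < r) : ∫⁻ x, g x = ENNReal.ofReal r * ∫⁻ p, g (r * p) := by
  conv_lhs => rw [← Real.smul_map_volume_mul_left hr.ne', lintegral_smul_measure,
    lintegral_map hg (by fun_prop), abs_of_pos hr]
  rfl

theorem lintegral_pow_mul_one_sub_pow (i j : ℕ) :
    ∫⁻ x in Ioo (0 : ℝ) 1, ENNReal.ofReal x ^ i * ENNReal.ofReal (1 - x) ^ j =
      ENNReal.ofReal (i ! * j ! / (i + j + 1)!) := by
  have hi : (0 : ℝ) < i + 1 := by positivity
  have hj : (0 : ℝ) < j + 1 := by positivity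
  have hbeta : ProbabilityTheory.beta (i + 1) (j + 1) = i ! * j ! / (i + j + 1)! := by
    rw [ProbabilityTheory.beta, Real.Gamma_nat_eq_factorial, Real.Gamma_nat_eq_factorial,
      show (i + 1 + (j + 1) : ℝ) = ((i + j + 1 : ℕ) : ℝ) + 1 by push_cast; ring,
      Real.Gamma_nat_eq_factorial]
  have hpos := ProbabilityTheory.beta_pos hi hj
  have hpdf := ProbabilityTheory.lintegral_betaPDF_eq_one hi hj
  rw [ProbabilityTheory.lintegral_betaPDF] at hpdf
  rw [← hbeta, ← mul_one (ENNReal.ofReal _), ← hpdf,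
    ← lintegral_const_mul' _ _ ENNReal.ofReal_ne_top]
  refine setLIntegral_congr_fun measurableSet_Ioo fun x hx ↦ ?_
  have hx' : 0 ≤ 1 - x := by linarith [hx.2]
  simp only [add_sub_cancel_right, Real.rpow_natCast]
  rw [← ENNReal.ofReal_pow hx.1.le, ← ENNReal.ofReal_pow hx', ← ENNReal.ofReal_mul (by
    have := hx.1; positivity), ← ENNReal.ofReal_mul hpos.le]
  congr 1
  field_simp

end Integrals

section Triangle

/-- The affine map sending `(0, 0)`, `(1, 0)`, `(0, 1)` to `a`, `b`, `c`; it maps `T` onto the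
triangle with vertices `a`, `b`, `c`. -/
def triangleMap (a b c : ℝ × ℝ) : ℝ × ℝ →ᵃ[ℝ] ℝ × ℝ :=
  (Matrix.toLin (Module.Basis.finTwoProd ℝ) (Module.Basis.finTwoProd ℝ)
    !![b.1 - a.1, c.1 - a.1; b.2 - a.2, c.2 - a.2]).toAffineMap + AffineMap.const ℝ _ a

/-- The Jacobian determinant of `triangleMap a b c`, twice the signed area of the triangle. -/
def triangleDet (a b c : ℝ × ℝ) : ℝ :=
  (b.1 - a.1) * (c.2 - a.2) - (c.1 - a.1) * (b.2 - a.2)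

variable (a b c : ℝ × ℝ)

lemma triangleMap_apply (u : ℝ × ℝ) : triangleMap a b c u =
    ((b.1 - a.1) * u.1 + (c.1 - a.1) * u.2 + a.1, (b.2 - a.2) * u.1 + (c.2 - a.2) * u.2 + a.2) := by
  ext <;> simp [triangleMap, Matrix.toLin_finTwoProd_apply]

lemma det_triangleMap_linear : LinearMap.det (triangleMap a b c).linear = triangleDet a b c := by
  simp [triangleMap, triangleDet, LinearMap.det_toLin, Matrix.det_fin_two_of]

lemma image_triangleMap_T : triangleMap a b c '' T = convexHull ℝ {a, b, c} := by
  rw [T, AffineMap.image_convexHull]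
  simp [image_insert_eq, triangleMap_apply]

lemma volume_image_triangleMap (s : Set (ℝ × ℝ)) :
    volume (triangleMap a b c '' s) = ENNReal.ofReal |triangleDet a b c| * volume s := by
  have himage : triangleMap a b c '' s =
      (fun u ↦ u + triangleMap a b c 0) '' ((triangleMap a b c).linear '' s) := by
    rw [image_image]
    exact image_congr fun u _ ↦ congrFun (AffineMap.decomp _) u
  rw [himage, image_add_right, measure_preimage_add_right, Measure.addHaar_image_linearMap,
    det_triangleMap_linear]

lemma measurable_triangleMap : Measurable (triangleMap a b c) := by
  have : Continuous (triangleMap a b c) := AffineMap.continuous_of_finiteDimensional _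
  exact this.measurable

lemma restrict_image_triangleMap (s : Set (ℝ × ℝ)) :
    volume.restrict (triangleMap a b c '' s) =
      ENNReal.ofReal |triangleDet a b c| • (volume.restrict s).map (triangleMap a b c) := by
  have hφ := measurable_triangleMap a b c
  refine Measure.ext fun t ht ↦ ?_
  rw [Measure.smul_apply, Measure.map_apply hφ ht, Measure.restrict_apply ht,
    Measure.restrict_apply (hφ ht), smul_eq_mul, ← volume_image_triangleMap, inter_comm _ s,
    image_inter_preimage, inter_comm]

lemma mem_T_iff {z : ℝ × ℝ} : z ∈ T ↔ 0 ≤ z.1 ∧ 0 ≤ z.2 ∧ z.1 + z.2 ≤ 1 := by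
  constructor
  · suffices T ⊆ {z : ℝ × ℝ | 0 ≤ z.1 ∧ 0 ≤ z.2 ∧ z.1 + z.2 ≤ 1} from fun hz ↦ this hz
    refine convexHull_min (by rintro z (rfl | rfl | rfl) <;> simp) ?_
    rintro ⟨x, y⟩ ⟨hx, hy, hxy⟩ ⟨x', y'⟩ ⟨hx', hy', hxy'⟩ s t hs ht hst
    simp only [Prod.smul_mk, smul_eq_mul, Prod.mk_add_mk, mem_ofPred_eq] at *
    exact ⟨by positivity, by positivity, by nlinarith⟩
  · rintro ⟨h₁, h₂, h₃⟩
    refine mem_convexHull_of_exists_fintype ![1 - z.1 - z.2, z.1, z.2]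
      ![(0, 0), (1, 0), (0, 1)] ?_ ?_ ?_ ?_
    · simp only [Fin.forall_fin_succ]
      exact ⟨(by linarith : 0 ≤ 1 - z.1 - z.2), h₁, h₂, nofun⟩
    · rw [Fin.sum_univ_three]
      change 1 - z.1 - z.2 + z.1 + z.2 = 1
      ring
    · simp [Fin.forall_fin_succ]
    · simp [Fin.sum_univ_three]

lemma measurableSet_T : MeasurableSet T :=
  measurableSet_convexHull_of_finite (by simp)

lemma lintegral_indicator_T_horizontal {f : ℝ × ℝ → ℝ≥0∞} (hf : Measurable f) {r : ℝ}
    (hr : r ∈ Ioo (0 : ℝ) 1) :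
    ∫⁻ x, T.indicator f (x, 1 - r) =
      ENNReal.ofReal r * ∫⁻ p in Ioo (0 : ℝ) 1, f (r * p, 1 - r) := by
  have hmem (p : ℝ) : (r * p, 1 - r) ∈ T ↔ p ∈ Icc (0 : ℝ) 1 := by
    rw [mem_T_iff, mem_Icc]
    constructor
    · rintro ⟨h₁, -, h₂⟩
      exact ⟨by nlinarith [hr.1], by nlinarith [hr.1]⟩
    · rintro ⟨h₁, h₂⟩
      exact ⟨mul_nonneg hr.1.le h₁, by linarith [hr.2], by nlinarith [hr.1]⟩
  have hmeas : Measurable fun x ↦ T.indicator f (x, 1 - r) :=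
    (hf.indicator measurableSet_T).comp (by fun_prop)
  rw [lintegral_eq_ofReal_mul_lintegral_comp_mul_left hmeas hr.1,
    setLIntegral_congr Ioo_ae_eq_Icc, ← lintegral_indicator measurableSet_Icc]
  congr! 3 with p
  simp only [indicator, hmem]

theorem lintegral_T {f : ℝ × ℝ → ℝ≥0∞} (hf : Measurable f) :
    ∫⁻ z in T, f z = ∫⁻ r in Ioo (0 : ℝ) 1,
      ENNReal.ofReal r * ∫⁻ p in Ioo (0 : ℝ) 1, f (r * p, 1 - r) := by
  rw [← lintegral_indicator measurableSet_T, Measure.volume_eq_prod,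
    lintegral_prod_symm' _ (hf.indicator measurableSet_T), ← lintegral_sub_left_eq_self _ (1 : ℝ),
    setLIntegral_congr_fun measurableSet_Ioo fun r hr ↦
      (lintegral_indicator_T_horizontal hf hr).symm, setLIntegral_congr Ioo_ae_eq_Icc,
    ← lintegral_indicator measurableSet_Icc]
  refine lintegral_congr fun r ↦ ?_
  by_cases hr : r ∈ Icc (0 : ℝ) 1
  · rw [indicator_of_mem hr]
  · rw [indicator_of_notMem hr, ← lintegral_zero (μ := (volume : Measure ℝ))]
    refine lintegral_congr fun x ↦ indicator_of_notMem (fun hT ↦ hr ?_) f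
    rw [mem_T_iff] at hT
    exact ⟨by linarith [hT.1], by linarith [hT.2.1]⟩

lemma volume_T : volume T = ENNReal.ofReal (1 / 2) := by
  have h := lintegral_T (f := fun _ ↦ 1) measurable_const
  have hbeta := lintegral_pow_mul_one_sub_pow 1 0
  simp only [lintegral_const, one_mul, Measure.restrict_apply_univ] at h
  simpa [h] using hbeta

theorem volume_convexHull_triangle :
    volume (convexHull ℝ {a, b, c}) = ENNReal.ofReal (|triangleDet a b c| / 2) := by
  rw [← image_triangleMap_T, volume_image_triangleMap, volume_T,
    ← ENNReal.ofReal_mul (abs_nonneg _), mul_one_div]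

theorem aedisjoint_triangle {o w z e : ℝ × ℝ} (hz : z ∈ segment ℝ w o) :
    AEDisjoint volume (convexHull ℝ {o, z, e}) (convexHull ℝ {w, z, e}) := by
  have hsum : volume (convexHull ℝ {o, w, e}) =
      volume (convexHull ℝ {o, z, e}) + volume (convexHull ℝ {w, z, e}) := by
    obtain ⟨s, t, hs, ht, hst, rfl⟩ := hz
    obtain rfl : t = 1 - s := by linarith
    have h₁ : triangleDet o (s • w + (1 - s) • o) e = s * triangleDet o w e := by
      simp only [triangleDet, Prod.fst_add, Prod.snd_add, Prod.smul_fst, Prod.smul_snd, smul_eq_mul]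
      ring
    have h₂ : triangleDet w (s • w + (1 - s) • o) e = -((1 - s) * triangleDet o w e) := by
      simp only [triangleDet, Prod.fst_add, Prod.snd_add, Prod.smul_fst, Prod.smul_snd, smul_eq_mul]
      ring
    rw [volume_convexHull_triangle, volume_convexHull_triangle, volume_convexHull_triangle, h₁, h₂,
      abs_neg, abs_mul, abs_mul, abs_of_nonneg hs, abs_of_nonneg ht,
      ← ENNReal.ofReal_add (by positivity) (by positivity)]
    congr 1
    ring
  have hinter := measure_union_add_inter (μ := volume) (convexHull ℝ {o, z, e})
    (measurableSet_convexHull_of_finite (s := {w, z, e}) (by simp))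
  rw [← convexHull_triangle_eq_union hz, hsum] at hinter
  refine (ENNReal.add_right_inj ?_).1 (hinter.trans (add_zero _).symm)
  simp only [volume_convexHull_triangle]
  finiteness

instance : IsProbabilityMeasure μT where
  measure_univ := by
    rw [μT, Measure.smul_apply, Measure.restrict_apply_univ, volume_T, smul_eq_mul,
      ← ENNReal.ofReal_ofNat 2, ← ENNReal.ofReal_mul zero_le_two]
    norm_num

end Triangle

section Chain

/-- Twice the area of the convex hull of `s` and the corners `(1, 0)`, `(0, 1)`: the normalized area
`V n ω` for `s = range ω`, as an extended nonnegative real. -/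
def chainArea (s : Set (ℝ × ℝ)) : ℝ≥0∞ :=
  2 * volume (convexHull ℝ (s ∪ {(1, 0), (0, 1)}))

lemma measurable_chainArea_range (m : ℕ) :
    Measurable fun ω : Fin m → ℝ × ℝ ↦ chainArea (range ω) := by
  have hmeas : Measurable fun ω : Fin m → ℝ × ℝ ↦
      (Sum.elim ω ![(1, 0), (0, 1)] : Fin m ⊕ Fin 2 → ℝ × ℝ) :=
    measurable_pi_iff.2 (Sum.rec (fun i ↦ measurable_pi_apply i) fun _ ↦ measurable_const)
  simpa only [chainArea, Function.comp_def, Sum.elim_range, Matrix.range_cons, Matrix.range_empty,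
    union_empty, singleton_union] using
    ((measurable_measure_convexHull_range volume).comp hmeas).const_mul 2

/-- The abscissa of the point where the line through `(0, 1)` and `z` meets the horizontal axis
(with junk value `0` for `z.2 = 1`). -/
def abscissa (z : ℝ × ℝ) : ℝ := z.1 / (1 - z.2)

lemma measurable_abscissa : Measurable abscissa := by
  unfold abscissa
  fun_prop

lemma abscissa_mk {r : ℝ} (hr : r ≠ 0) (p : ℝ) : abscissa (r * p, 1 - r) = p := by
  simp [abscissa, hr]

lemma μT_abscissa_eq (c : ℝ) : μT {z | abscissa z = c} = 0 := by
  have hmeas : MeasurableSet {z | abscissa z = c} := measurable_abscissa (measurableSet_singleton c)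
  have hinner : ∀ r ∈ Ioo (0 : ℝ) 1, ENNReal.ofReal r *
      ∫⁻ p in Ioo (0 : ℝ) 1, {z | abscissa z = c}.indicator 1 (r * p, 1 - r) = 0 := by
    intro r hr
    have hind (p : ℝ) : {z | abscissa z = c}.indicator (1 : ℝ × ℝ → ℝ≥0∞) (r * p, 1 - r) =
        ({c} : Set ℝ).indicator 1 p := by
      simp only [indicator, mem_ofPred_eq, abscissa_mk hr.1.ne', mem_singleton_iff, Pi.one_apply]
    simp only [hind, lintegral_indicator_one (measurableSet_singleton c)]
    simp
  rw [μT, Measure.smul_apply, ← lintegral_indicator_one hmeas,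
    lintegral_T (measurable_one.indicator hmeas), setLIntegral_congr_fun measurableSet_Ioo hinner]
  simp

lemma mem_rayTriangle_iff {p : ℝ} (hp : p < 1) {y : ℝ × ℝ} :
    y ∈ convexHull ℝ {((0, 1) : ℝ × ℝ), (p, 0), (1, 0)} ↔
      p * (1 - y.2) ≤ y.1 ∧ 0 ≤ y.2 ∧ y.1 + y.2 ≤ 1 := by
  have hp' : 0 < 1 - p := sub_pos.2 hp
  rw [← image_triangleMap_T]
  constructor
  · rintro ⟨u, hu, rfl⟩
    obtain ⟨h₁, h₂, h₃⟩ := mem_T_iff.1 hu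
    simp only [triangleMap_apply]
    exact ⟨by nlinarith, by linarith, by nlinarith⟩
  · rintro ⟨h₁, h₂, h₃⟩
    refine ⟨((1 - y.1 - y.2) / (1 - p), (y.1 - p * (1 - y.2)) / (1 - p)),
      mem_T_iff.2 ⟨?_, ?_, ?_⟩, ?_⟩
    · exact div_nonneg (by linarith) hp'.le
    · exact div_nonneg (by linarith) hp'.le
    · rw [← add_div, div_le_one hp']
      nlinarith
    · rw [triangleMap_apply]
      ext <;> dsimp <;> field_simp <;> ring

lemma inter_T_ae_eq_rayTriangle {p : ℝ} (hp : p ∈ Ioo (0 : ℝ) 1) :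
    ({y | p ≤ abscissa y} ∩ T : Set (ℝ × ℝ)) =ᵐ[volume]
      convexHull ℝ {((0, 1) : ℝ × ℝ), (p, 0), (1, 0)} := by
  filter_upwards [Measure.ae_ne volume ((0, 1) : ℝ × ℝ)] with y hy
  refine propext ?_
  change p ≤ abscissa y ∧ y ∈ T ↔ y ∈ convexHull ℝ _
  rw [mem_rayTriangle_iff hp.2, mem_T_iff]
  have hlt (h₁ : 0 ≤ y.1) (h₃ : y.1 + y.2 ≤ 1) : 0 < 1 - y.2 := by
    refine (by linarith : 0 ≤ 1 - y.2).lt_of_ne fun h ↦ hy ?_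
    ext <;> dsimp <;> linarith
  constructor
  · rintro ⟨h, h₁, h₂, h₃⟩
    exact ⟨(le_div_iff₀ (hlt h₁ h₃)).1 h, h₂, h₃⟩
  · rintro ⟨h, h₂, h₃⟩
    have h₁ : 0 ≤ y.1 := by nlinarith [hp.1, hp.2]
    exact ⟨(le_div_iff₀ (hlt h₁ h₃)).2 h, h₁, h₂, h₃⟩

variable {r p : ℝ}

lemma mem_segment_ray (hr : r ∈ Ioo (0 : ℝ) 1) :
    ((r * p, 1 - r) : ℝ × ℝ) ∈ segment ℝ (p, 0) (0, 1) :=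
  ⟨r, 1 - r, hr.1.le, by linarith [hr.2], by ring, by simp⟩

/-- The affine map of `T` onto the triangle with vertices `(p, 0)`, `(r * p, 1 - r)`, `(1, 0)`,
under which the chain in `T` becomes the part of a chain beyond its first vertex
`(r * p, 1 - r)`. -/
def chainMap (r p : ℝ) : ℝ × ℝ →ᵃ[ℝ] ℝ × ℝ := triangleMap (p, 0) (r * p, 1 - r) (1, 0)

lemma measurable_chainMap : Measurable (chainMap r p) :=
  measurable_triangleMap _ _ _

instance : IsProbabilityMeasure (μT.map (chainMap r p)) :=
  Measure.isProbabilityMeasure_map measurable_chainMap.aemeasurable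

lemma abs_triangleDet_chainMap (hr : r ∈ Ioo (0 : ℝ) 1) (hp : p ∈ Ioo (0 : ℝ) 1) :
    |triangleDet (p, 0) (r * p, 1 - r) (1, 0)| = (1 - r) * (1 - p) := by
  rw [← abs_of_pos (mul_pos (sub_pos.2 hr.2) (sub_pos.2 hp.2)), ← abs_neg]
  congr 1
  simp only [triangleDet]
  ring

lemma two_mul_volume_firstTriangle (hr : r ∈ Ioo (0 : ℝ) 1) (hp : p ∈ Ioo (0 : ℝ) 1) :
    2 * volume (convexHull ℝ {((0, 1) : ℝ × ℝ), (r * p, 1 - r), (1, 0)}) =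
      ENNReal.ofReal (r * (1 - p)) := by
  have hdet : triangleDet (0, 1) (r * p, 1 - r) (1, 0) = r * (1 - p) := by
    simp only [triangleDet]
    ring
  rw [volume_convexHull_triangle, hdet, abs_of_pos (mul_pos hr.1 (sub_pos.2 hp.2)),
    ← ENNReal.ofReal_ofNat 2, ← ENNReal.ofReal_mul zero_le_two, mul_div_cancel₀ _ two_ne_zero]

theorem μT_restrict_le_abscissa (hr : r ∈ Ioo (0 : ℝ) 1) (hp : p ∈ Ioo (0 : ℝ) 1) :
    μT.restrict {y | p ≤ abscissa y} =
      Real.toNNReal ((1 - r) * (1 - p)) • μT.map (chainMap r p) +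
        (2 : ℝ≥0∞) • volume.restrict
          (convexHull ℝ {((0, 1) : ℝ × ℝ), (r * p, 1 - r), (1, 0)}) := by
  have hz := mem_segment_ray (p := p) hr
  rw [μT, Measure.restrict_smul,
    Measure.restrict_restrict (measurableSet_le measurable_const measurable_abscissa),
    Measure.restrict_congr_set (inter_T_ae_eq_rayTriangle hp), convexHull_triangle_eq_union hz,
    Measure.restrict_union₀ (aedisjoint_triangle hz)
      (measurableSet_convexHull_of_finite (by simp)).nullMeasurableSet,
    ← image_triangleMap_T (p, 0), restrict_image_triangleMap, abs_triangleDet_chainMap hr hp,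
    Measure.map_smul, smul_add, add_comm, smul_comm]
  rfl

theorem chainArea_insert_image_chainMap (hr : r ∈ Ioo (0 : ℝ) 1) (hp : p ∈ Ioo (0 : ℝ) 1)
    {s : Set (ℝ × ℝ)} (hs : s ⊆ T) :
    chainArea (insert (r * p, 1 - r) (chainMap r p '' s)) =
      ENNReal.ofReal (r * (1 - p)) + ENNReal.ofReal ((1 - r) * (1 - p)) * chainArea s := by
  set S := s ∪ {((1, 0) : ℝ × ℝ), (0, 1)} with hS
  have hz := mem_segment_ray (p := p) hr
  have hz' : (r * p, 1 - r) = chainMap r p (1, 0) := by simp [chainMap, triangleMap_apply]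
  have he : ((1, 0) : ℝ × ℝ) = chainMap r p (0, 1) := by simp [chainMap, triangleMap_apply]
  have hST : S ⊆ T := union_subset hs (by
    rintro y (rfl | rfl) <;> simp [mem_T_iff])
  have himage : chainMap r p '' S ⊆ convexHull ℝ {(p, 0), (r * p, 1 - r), (1, 0)} :=
    (image_mono hST).trans (image_triangleMap_T _ _ _).subset
  have hset : insert (r * p, 1 - r) (chainMap r p '' s) ∪ {((1, 0) : ℝ × ℝ), (0, 1)} =
      insert (0, 1) (chainMap r p '' S) := by
    rw [hS, image_union, image_pair, ← hz', ← he]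
    grind
  have hdisj : AEDisjoint volume (convexHull ℝ {((0, 1) : ℝ × ℝ), (r * p, 1 - r), (1, 0)})
      (convexHull ℝ (chainMap r p '' S)) :=
    (aedisjoint_triangle hz).mono Subset.rfl (convexHull_min himage (convex_convexHull ℝ _))
  rw [chainArea, hset, convexHull_insert_eq_triangle_union hz
      (hz' ▸ mem_image_of_mem _ (by simp [hS])) (he ▸ mem_image_of_mem _ (by simp [hS])) himage,
    measure_union₀' (measurableSet_convexHull_of_finite (by simp)).nullMeasurableSet hdisj,
    ← AffineMap.image_convexHull, chainMap, volume_image_triangleMap,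
    abs_triangleDet_chainMap hr hp, mul_add, two_mul_volume_firstTriangle hr hp, mul_left_comm]
  rfl

lemma chainArea_insert_insert_of_mem {y z : ℝ × ℝ}
    (hy : y ∈ convexHull ℝ {((0, 1) : ℝ × ℝ), z, (1, 0)}) (s : Set (ℝ × ℝ)) :
    chainArea (insert z (insert y s)) = chainArea (insert z s) := by
  rw [chainArea, chainArea, insert_comm, insert_union,
    convexHull_insert_of_mem (convexHull_mono (by grind) hy)]

lemma ae_range_subset_T (m : ℕ) : ∀ᵐ ω ∂P m, range ω ⊆ T := by
  have hT : ∀ᵐ y ∂μT, y ∈ T :=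
    Measure.ae_smul_measure (ae_restrict_mem measurableSet_T) _
  simp only [range_subset_iff]
  exact ae_all_iff.2 fun i ↦ Measure.tendsto_eval_ae_ae (μ := fun _ : Fin m ↦ μT) (i := i) hT

variable {F : ℝ≥0∞ → ℝ≥0∞}

lemma measurable_comp_chainArea_insert (hF : Measurable F) (z : ℝ × ℝ) (m : ℕ) :
    Measurable fun ω : Fin m → ℝ × ℝ ↦ F (chainArea (insert z (range ω))) :=
  measurable_insert_const_range (g := fun s ↦ F (chainArea s))
    (fun k ↦ hF.comp (measurable_chainArea_range k)) z m

lemma lintegral_pi_map_chainMap (hF : Measurable F) (hr : r ∈ Ioo (0 : ℝ) 1)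
    (hp : p ∈ Ioo (0 : ℝ) 1) (m : ℕ) :
    ∫⁻ ω, F (chainArea (insert (r * p, 1 - r) (range ω)))
        ∂(Measure.pi fun _ : Fin m ↦ μT.map (chainMap r p)) =
      ∫⁻ ω, F (ENNReal.ofReal (r * (1 - p)) +
        ENNReal.ofReal ((1 - r) * (1 - p)) * chainArea (range ω)) ∂P m := by
  have hmap : Measurable fun (ω : Fin m → ℝ × ℝ) i ↦ chainMap r p (ω i) :=
    measurable_pi_lambda _ fun i ↦ measurable_chainMap.comp (measurable_pi_apply i)
  rw [← Measure.pi_map_pi fun _ ↦ measurable_chainMap.aemeasurable,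
    lintegral_map (measurable_comp_chainArea_insert hF _ m) hmap]
  refine lintegral_congr_ae ((ae_range_subset_T m).mono fun ω hω ↦ ?_)
  dsimp only
  rw [← chainArea_insert_image_chainMap hr hp hω, ← range_comp, Function.comp_def]

lemma lintegral_pi_restrict_le_abscissa (hF : Measurable F) (hr : r ∈ Ioo (0 : ℝ) 1)
    (hp : p ∈ Ioo (0 : ℝ) 1) (n : ℕ) :
    ∫⁻ ω, F (chainArea (insert (r * p, 1 - r) (range ω)))
        ∂(Measure.pi fun _ : Fin n ↦ μT.restrict {y | p ≤ abscissa y}) =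
      ∑ m ∈ Finset.range (n + 1), (n.choose m : ℝ≥0∞) *
        (ENNReal.ofReal (r * (1 - p)) ^ (n - m) * (ENNReal.ofReal ((1 - r) * (1 - p)) ^ m *
          ∫⁻ ω, F (ENNReal.ofReal (r * (1 - p)) +
            ENNReal.ofReal ((1 - r) * (1 - p)) * chainArea (range ω)) ∂P m)) := by
  have hA := measurableSet_convexHull_of_finite
    (s := {((0, 1) : ℝ × ℝ), (r * p, 1 - r), (1, 0)}) (by simp)
  have : IsFiniteMeasure ((2 : ℝ≥0∞) • volume.restrict
      (convexHull ℝ {((0, 1) : ℝ × ℝ), (r * p, 1 - r), (1, 0)})) :=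
    ⟨by rw [Measure.smul_apply, Measure.restrict_apply_univ, smul_eq_mul,
      two_mul_volume_firstTriangle hr hp]; exact ENNReal.ofReal_lt_top⟩
  rw [μT_restrict_le_abscissa hr hp, lintegral_pi_add_of_insert_ae
    (g := fun s ↦ F (chainArea (insert (r * p, 1 - r) s)))]
  · simp only [pi_smul_const, lintegral_smul_measure, lintegral_pi_map_chainMap hF hr hp,
      Measure.smul_apply, Measure.restrict_apply_univ, smul_eq_mul,
      two_mul_volume_firstTriangle hr hp, ENNReal.ofNNReal_toNNReal]
  · exact measurable_comp_chainArea_insert hF _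
  · refine Measure.ae_smul_measure ((ae_restrict_mem hA).mono fun y hy s ↦ ?_) _
    rw [chainArea_insert_insert_of_mem hy]

theorem lintegral_chainArea_succ (hF : Measurable F) (n : ℕ) :
    ∫⁻ ω, F (chainArea (range ω)) ∂P (n + 1) =
      2 * (n + 1) * ∫⁻ r in Ioo (0 : ℝ) 1, ENNReal.ofReal r * ∫⁻ p in Ioo (0 : ℝ) 1,
        ∑ m ∈ Finset.range (n + 1), (n.choose m : ℝ≥0∞) *
          (ENNReal.ofReal (r * (1 - p)) ^ (n - m) * (ENNReal.ofReal ((1 - r) * (1 - p)) ^ m *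
            ∫⁻ ω, F (ENNReal.ofReal (r * (1 - p)) +
              ENNReal.ofReal ((1 - r) * (1 - p)) * chainArea (range ω)) ∂P m)) := by
  have hmeas : Measurable fun z ↦ ∫⁻ ω, F (chainArea (insert z (range ω)))
      ∂(Measure.pi fun _ : Fin n ↦ μT.restrict {y | abscissa z ≤ abscissa y}) :=
    measurable_lintegral_pi_restrict (g := fun s ↦ F (chainArea s)) μT measurable_abscissa
      (fun m ↦ hF.comp (measurable_chainArea_range m)) n
  rw [P, lintegral_pi_succ_eq_mul_lintegral_restrict (g := fun s ↦ F (chainArea s)) μT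
    measurable_abscissa μT_abscissa_eq (fun m ↦ hF.comp (measurable_chainArea_range m))]
  conv_lhs => enter [2, 1]; rw [μT]
  rw [lintegral_smul_measure, lintegral_T hmeas, smul_eq_mul, ← mul_assoc, mul_comm (n + 1 : ℝ≥0∞)]
  congr 1
  refine setLIntegral_congr_fun measurableSet_Ioo fun r hr ↦ ?_
  congr 1
  refine setLIntegral_congr_fun measurableSet_Ioo fun p hp ↦ ?_
  simp only [abscissa_mk hr.1.ne', lintegral_pi_restrict_le_abscissa hF hr hp]

end Chain

section Moments

/-- The `k`-th moment of the normalized area of the random convex chain on `n` points, as a lower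
integral. -/
def chainMoment (n k : ℕ) : ℝ≥0∞ := ∫⁻ ω, chainArea (range ω) ^ k ∂P n

lemma lintegral_add_mul_chainArea_pow (a b : ℝ≥0∞) (n k : ℕ) :
    ∫⁻ ω, (a + b * chainArea (range ω)) ^ k ∂P n =
      ∑ j ∈ Finset.range (k + 1), k.choose j * (a ^ (k - j) * b ^ j * chainMoment n j) := by
  have hmeas (j : ℕ) : Measurable fun ω : Fin n → ℝ × ℝ ↦ chainArea (range ω) ^ j :=
    (measurable_chainArea_range n).pow_const j
  have hexp (ω : Fin n → ℝ × ℝ) : (a + b * chainArea (range ω)) ^ k =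
      ∑ j ∈ Finset.range (k + 1),
        k.choose j * (a ^ (k - j) * b ^ j * chainArea (range ω) ^ j) := by
    rw [add_comm, add_pow]
    exact Finset.sum_congr rfl fun j _ ↦ by ring
  simp only [hexp]
  rw [lintegral_finsetSum _ fun j _ ↦ ((hmeas j).const_mul _).const_mul _]
  simp only [lintegral_const_mul _ ((hmeas _).const_mul _), lintegral_const_mul _ (hmeas _),
    chainMoment]

lemma lintegral_sum_mul_pow {ι : Type*} (s : Finset ι) (K : ι → ℝ≥0∞) (i j : ι → ℕ) (l : ℕ) :
    ∫⁻ r in Ioo (0 : ℝ) 1, ENNReal.ofReal r * ∫⁻ p in Ioo (0 : ℝ) 1,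
        ∑ x ∈ s, K x * (ENNReal.ofReal r ^ i x * ENNReal.ofReal (1 - r) ^ j x *
          ENNReal.ofReal (1 - p) ^ l) =
      ∑ x ∈ s, K x *
        ENNReal.ofReal ((i x + 1)! * (j x)! / (i x + j x + 2)! * (l ! / (l + 1)!)) := by
  have hp := lintegral_pow_mul_one_sub_pow 0 l
  simp only [pow_zero, one_mul, Nat.factorial_zero, Nat.cast_one, zero_add] at hp
  have hinner (r : ℝ) : ENNReal.ofReal r * ∫⁻ p in Ioo (0 : ℝ) 1,
        ∑ x ∈ s, K x * (ENNReal.ofReal r ^ i x * ENNReal.ofReal (1 - r) ^ j x *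
          ENNReal.ofReal (1 - p) ^ l) =
      ∑ x ∈ s, K x * (ENNReal.ofReal r ^ (i x + 1) * ENNReal.ofReal (1 - r) ^ j x *
        ENNReal.ofReal (l ! / (l + 1)!)) := by
    rw [lintegral_finsetSum _ fun x _ ↦ by fun_prop, Finset.mul_sum]
    refine Finset.sum_congr rfl fun x _ ↦ ?_
    rw [lintegral_const_mul _ (by fun_prop), lintegral_const_mul _ (by fun_prop), hp]
    ring
  simp only [hinner]
  rw [lintegral_finsetSum _ fun x _ ↦ by fun_prop]
  refine Finset.sum_congr rfl fun x _ ↦ ?_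
  rw [lintegral_const_mul _ (by fun_prop), lintegral_mul_const _ (by fun_prop),
    lintegral_pow_mul_one_sub_pow, ← ENNReal.ofReal_mul (by positivity),
    show i x + 1 + j x + 1 = i x + j x + 2 by ring]

lemma sum_chain_integrand {r p : ℝ} (hr : r ∈ Ioo (0 : ℝ) 1) (n k : ℕ) :
    ∑ m ∈ Finset.range (n + 1), (n.choose m : ℝ≥0∞) *
        (ENNReal.ofReal (r * (1 - p)) ^ (n - m) * (ENNReal.ofReal ((1 - r) * (1 - p)) ^ m *
          ∫⁻ ω, (ENNReal.ofReal (r * (1 - p)) +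
            ENNReal.ofReal ((1 - r) * (1 - p)) * chainArea (range ω)) ^ k ∂P m)) =
      ∑ x ∈ Finset.range (n + 1) ×ˢ Finset.range (k + 1),
        n.choose x.1 * k.choose x.2 * chainMoment x.1 x.2 *
          (ENNReal.ofReal r ^ (n - x.1 + (k - x.2)) * ENNReal.ofReal (1 - r) ^ (x.1 + x.2) *
            ENNReal.ofReal (1 - p) ^ (n + k)) := by
  rw [Finset.sum_product]
  refine Finset.sum_congr rfl fun m hm ↦ ?_
  rw [lintegral_add_mul_chainArea_pow, Finset.mul_sum, Finset.mul_sum, Finset.mul_sum]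
  refine Finset.sum_congr rfl fun j hj ↦ ?_
  obtain ⟨a, rfl⟩ := Nat.exists_eq_add_of_le (Finset.mem_range_succ_iff.1 hm)
  obtain ⟨b, rfl⟩ := Nat.exists_eq_add_of_le (Finset.mem_range_succ_iff.1 hj)
  rw [ENNReal.ofReal_mul hr.1.le, ENNReal.ofReal_mul (sub_pos.2 hr.2).le, add_tsub_cancel_left,
    add_tsub_cancel_left]
  ring

theorem chainMoment_succ (n k : ℕ) :
    chainMoment (n + 1) k = 2 * (n + 1) *
      ∑ m ∈ Finset.range (n + 1), ∑ j ∈ Finset.range (k + 1),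
        n.choose m * k.choose j * chainMoment m j *
          ENNReal.ofReal ((n - m + (k - j) + 1)! * (m + j)! / (n + k + 2)! *
            ((n + k)! / (n + k + 1)!)) := by
  rw [chainMoment, lintegral_chainArea_succ (F := (· ^ k)) (by fun_prop),
    setLIntegral_congr_fun measurableSet_Ioo fun r hr ↦ congrArg (ENNReal.ofReal r * ·)
      (setLIntegral_congr_fun measurableSet_Ioo fun p _ ↦ sum_chain_integrand hr n k),
    lintegral_sum_mul_pow, Finset.sum_product]
  refine congrArg _ (Finset.sum_congr rfl fun m hm ↦ Finset.sum_congr rfl fun j hj ↦ ?_)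
  have hm := Finset.mem_range_succ_iff.1 hm
  have hj := Finset.mem_range_succ_iff.1 hj
  rw [show n - m + (k - j) + (m + j) + 2 = n + k + 2 by omega]

lemma chainArea_le_one {s : Set (ℝ × ℝ)} (hs : s ⊆ T) : chainArea s ≤ 1 := by
  have hsub : convexHull ℝ (s ∪ {(1, 0), (0, 1)}) ⊆ T :=
    convexHull_min (union_subset hs (by rintro y (rfl | rfl) <;> simp [mem_T_iff]))
      (convex_convexHull ℝ _)
  have hT : 2 * volume T = 1 := by
    simpa [μT] using measure_univ (μ := μT)
  exact (mul_le_mul_right (measure_mono hsub) 2).trans hT.le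

instance (n : ℕ) : IsProbabilityMeasure (P n) :=
  inferInstanceAs (IsProbabilityMeasure (Measure.pi fun _ : Fin n ↦ μT))

lemma chainMoment_le_one (n k : ℕ) : chainMoment n k ≤ 1 := by
  have hle : ∀ᵐ ω ∂P n, chainArea (range ω) ^ k ≤ 1 :=
    (ae_range_subset_T n).mono fun ω hω ↦ pow_le_one₀ zero_le (chainArea_le_one hω)
  simpa [chainMoment] using lintegral_mono_ae hle

lemma integral_V_pow (n k : ℕ) : ∫ ω, V n ω ^ k ∂P n = (chainMoment n k).toReal := by
  rw [chainMoment, ← integral_toReal ((measurable_chainArea_range n).pow_const k).aemeasurable]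
  · simp only [ENNReal.toReal_pow, chainArea, ENNReal.toReal_mul, ENNReal.toReal_ofNat, V, Tchain]
  · exact (ae_range_subset_T n).mono fun ω hω ↦
      ENNReal.pow_lt_top ((chainArea_le_one hω).trans_lt ENNReal.one_lt_top)

lemma q_eq (n k : ℕ) : q n k = (n + k).choose k * (chainMoment n k).toReal := by
  rw [q, integral_V_pow]

lemma q_zero_right (n : ℕ) : q n 0 = 1 := by
  simp [q]

lemma q_zero_left {k : ℕ} (hk : k ≠ 0) : q 0 k = 0 := by
  have hdeg : volume (convexHull ℝ {((1, 0) : ℝ × ℝ), (0, 1)}) = 0 := by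
    simpa [triangleDet] using volume_convexHull_triangle (1, 0) (1, 0) (0, 1)
  simp [q, V, Tchain, -convexHull_pair, hdeg, hk]

lemma toReal_chainMoment_succ (n k : ℕ) :
    (chainMoment (n + 1) k).toReal = 2 * (n + 1) *
      ∑ m ∈ Finset.range (n + 1), ∑ j ∈ Finset.range (k + 1),
        n.choose m * k.choose j * (chainMoment m j).toReal *
          ((n - m + (k - j) + 1)! * (m + j)! / (n + k + 2)! * ((n + k)! / (n + k + 1)!)) := by
  have hfin (m j : ℕ) : chainMoment m j ≠ ∞ := ne_top_of_le_ne_top ENNReal.one_ne_top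
    (chainMoment_le_one m j)
  rw [chainMoment_succ, ENNReal.toReal_mul, ENNReal.toReal_sum]
  · congr 1
    refine Finset.sum_congr rfl fun m _ ↦ ?_
    rw [ENNReal.toReal_sum fun j _ ↦ by finiteness [hfin m j]]
    refine Finset.sum_congr rfl fun j _ ↦ ?_
    rw [ENNReal.toReal_mul, ENNReal.toReal_mul, ENNReal.toReal_mul, ENNReal.toReal_natCast,
      ENNReal.toReal_natCast, ENNReal.toReal_ofReal (by positivity)]
  · exact fun m _ ↦ ENNReal.sum_ne_top.2 fun j _ ↦ by finiteness [hfin m j]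

-- The substitution `n = m + a`, `k = j + b` keeps truncated subtraction out of the factorials.
lemma chain_factorial_weight (m a j b : ℕ) :
    ((m + a + 1 + (j + b) : ℕ) : ℝ) * (m + a + 1 + (j + b) + 1 : ℕ) / 2 *
        ((m + a + 1 + (j + b)).choose (j + b) * (2 * ((m + a : ℕ) + 1) *
          ((m + a).choose m * (j + b).choose j *
            ((a + b + 1)! * (m + j)! / (m + a + (j + b) + 2)! *
              ((m + a + (j + b))! / (m + a + (j + b) + 1)!))))) =
      (a + 1) * (a + 1 + b).choose b * (m + j).choose j := by
  have hchoose (x y : ℕ) : ((x + y).choose y : ℝ) = (x + y)! / (x ! * y !) := by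
    rw [← Nat.choose_symm_add, Nat.cast_add_choose]
  simp only [hchoose, Nat.cast_add_choose]
  rw [show m + a + 1 + (j + b) = m + a + (j + b) + 1 by ring,
    show a + 1 + b = a + b + 1 by ring]
  simp only [Nat.factorial_succ]
  push_cast
  field_simp

theorem q_recursion (n k : ℕ) :
    ((n : ℝ) + k) * (n + k + 1) / 2 * q n k =
      ∑ m ∈ Finset.range n, ∑ j ∈ Finset.range (k + 1),
        ((n : ℝ) - m) * (n - m + (k - j)).choose (k - j) * q m j := by
  cases n with
  | zero =>
    rcases eq_or_ne k 0 with rfl | hk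
    · simp
    · simp [q_zero_left hk]
  | succ n =>
    rw [q_eq, toReal_chainMoment_succ]
    simp only [Finset.mul_sum]
    refine Finset.sum_congr rfl fun m hm ↦ Finset.sum_congr rfl fun j hj ↦ ?_
    obtain ⟨a, rfl⟩ := Nat.exists_eq_add_of_le (Finset.mem_range_succ_iff.1 hm)
    obtain ⟨b, rfl⟩ := Nat.exists_eq_add_of_le (Finset.mem_range_succ_iff.1 hj)
    have hweight := congrArg (· * (chainMoment m j).toReal) (chain_factorial_weight m a j b)
    rw [show m + a + 1 - m = a + 1 by omega, add_tsub_cancel_left, add_tsub_cancel_left, q_eq]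
    push_cast at hweight ⊢
    linear_combination hweight

end Moments

section ClosedForms

/-- The sum of the first `n` partial sums of `f`: the solution of the difference equation
`u (n + 2) - 2 * u (n + 1) + u n = f (n + 1)` with `u 0 = 0` and `u 1 = f 0`. -/
def iteratedSum (f : ℕ → ℝ) (n : ℕ) : ℝ := ∑ m ∈ Finset.range n, ((n : ℝ) - m) * f m

lemma iteratedSum_succ (f : ℕ → ℝ) (n : ℕ) :
    iteratedSum f (n + 1) = iteratedSum f n + ∑ m ∈ Finset.range (n + 1), f m := by
  have hlast : iteratedSum f n = ∑ m ∈ Finset.range (n + 1), ((n : ℝ) - m) * f m := by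
    simp [iteratedSum, Finset.sum_range_succ]
  rw [hlast, iteratedSum, ← Finset.sum_add_distrib]
  exact Finset.sum_congr rfl fun m _ ↦ by push_cast; ring

lemma iteratedSum_add_two (f : ℕ → ℝ) (n : ℕ) :
    iteratedSum f (n + 2) = 2 * iteratedSum f (n + 1) - iteratedSum f n + f (n + 1) := by
  linarith [iteratedSum_succ f n, iteratedSum_succ f (n + 1), Finset.sum_range_succ f (n + 1)]

lemma sum_sub_mul_sub_add_one_mul_succ (f : ℕ → ℝ) (n : ℕ) :
    ∑ m ∈ Finset.range (n + 1), ((n + 1 : ℕ) - m : ℝ) * ((n + 1 : ℕ) - m + 1) * f m =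
      ∑ m ∈ Finset.range n, ((n : ℝ) - m) * (n - m + 1) * f m + 2 * iteratedSum f (n + 1) := by
  have hlast : ∑ m ∈ Finset.range n, ((n : ℝ) - m) * (n - m + 1) * f m =
      ∑ m ∈ Finset.range (n + 1), ((n : ℝ) - m) * (n - m + 1) * f m := by
    simp [Finset.sum_range_succ]
  rw [hlast, iteratedSum, Finset.mul_sum, ← Finset.sum_add_distrib]
  exact Finset.sum_congr rfl fun m _ ↦ by push_cast; ring

lemma sum_sub_mul_sub_add_one (n : ℕ) :
    ∑ m ∈ Finset.range n, ((n : ℝ) - m) * (n - m + 1) = n * (n + 1) * (n + 2) / 3 := by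
  induction n with
  | zero => simp
  | succ n ih =>
    simp only [Finset.sum_range_succ', Nat.cast_succ, add_sub_add_right_eq_sub, ih]
    push_cast
    ring

lemma sum_sub_mul_sub_add_one_mul_sub_add_two (n : ℕ) :
    ∑ m ∈ Finset.range n, ((n : ℝ) - m) * (n - m + 1) * (n - m + 2) =
      n * (n + 1) * (n + 2) * (n + 3) / 4 := by
  induction n with
  | zero => simp
  | succ n ih =>
    simp only [Finset.sum_range_succ', Nat.cast_succ, add_sub_add_right_eq_sub, ih]
    push_cast
    ring

lemma H_succ (n : ℕ) : H (n + 1) = H n + 1 / (n + 1) :=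
  Finset.sum_range_succ _ n

lemma H2_succ (n : ℕ) : H2 (n + 1) = H2 n + 1 / (n + 1) ^ 2 :=
  Finset.sum_range_succ _ n

lemma q_one_recursion (n : ℕ) :
    ((n : ℝ) + 1) * (n + 2) / 2 * q n 1 =
      n * (n + 1) * (n + 2) / 3 + iteratedSum (q · 1) n := by
  have hsum : ((n : ℝ) + 1) * (n + 2) / 2 * q n 1 =
      ∑ m ∈ Finset.range n, (((n : ℝ) - m) * (n - m + 1) + (n - m) * q m 1) := by
    convert q_recursion n 1 using 1
    · push_cast
      ring
    · refine Finset.sum_congr rfl fun m hm ↦ ?_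
      simp [Finset.sum_range_succ, q_zero_right, Nat.cast_sub (Finset.mem_range.1 hm).le]
  rw [hsum, Finset.sum_add_distrib, sum_sub_mul_sub_add_one, iteratedSum]

lemma q_two_recursion (n : ℕ) :
    ((n : ℝ) + 2) * (n + 3) / 2 * q n 2 =
      n * (n + 1) * (n + 2) * (n + 3) / 8 +
        ∑ m ∈ Finset.range n, ((n : ℝ) - m) * (n - m + 1) * q m 1 + iteratedSum (q · 2) n := by
  have hsum : ((n : ℝ) + 2) * (n + 3) / 2 * q n 2 =
      ∑ m ∈ Finset.range n, (((n : ℝ) - m) * (n - m + 1) * (n - m + 2) / 2 +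
        (n - m) * (n - m + 1) * q m 1 + (n - m) * q m 2) := by
    convert q_recursion n 2 using 1
    · push_cast
      ring
    · refine Finset.sum_congr rfl fun m hm ↦ ?_
      simp only [Finset.sum_range_succ, Finset.range_zero, Finset.sum_empty, zero_add,
        Nat.cast_choose_two, Nat.sub_zero, Nat.sub_self, Nat.add_one_sub_one, Nat.choose_one_right,
        Nat.choose_zero_right, q_zero_right, Nat.cast_add, Nat.cast_sub (Finset.mem_range.1 hm).le]
      push_cast
      ring
  rw [hsum, Finset.sum_add_distrib, Finset.sum_add_distrib, ← Finset.sum_div,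
    sum_sub_mul_sub_add_one_mul_sub_add_two, iteratedSum]
  ring

lemma q_one_difference_equation (n : ℕ) :
    ((n : ℝ) + 3) * (n + 4) / 2 * q (n + 2) 1 =
      2 * (n + 2) + ((n + 2) * (n + 3) + 1) * q (n + 1) 1 - (n + 1) * (n + 2) / 2 * q n 1 := by
  have h₀ := q_one_recursion n
  have h₁ := q_one_recursion (n + 1)
  have h₂ := q_one_recursion (n + 2)
  rw [iteratedSum_add_two] at h₂
  push_cast at h₁ h₂
  linear_combination h₂ - 2 * h₁ + h₀

theorem q_one_eq (n : ℕ) : q n 1 = n + 2 / 3 - 2 / 3 * H (n + 1) := by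
  induction n using Nat.twoStepInduction with
  | zero => rw [q_zero_left one_ne_zero]; norm_num [H]
  | one =>
    have h := q_one_recursion 1
    norm_num [iteratedSum, q_zero_left, H, Finset.sum_range_succ] at h ⊢
    linarith
  | more n ih₀ ih₁ =>
    have hdiff := q_one_difference_equation n
    rw [ih₀, ih₁, H_succ (n + 1)] at hdiff
    have hn : ((n : ℝ) + 3) * (n + 4) / 2 ≠ 0 := by positivity
    refine mul_left_cancel₀ hn ?_
    rw [hdiff, H_succ (n + 2), H_succ (n + 1)]
    push_cast
    field_simp
    ring

lemma q_two_difference_equation (n : ℕ) :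
    ((n : ℝ) + 4) * (n + 5) / 2 * q (n + 2) 2 =
      (n + 3) * (n + 4) * q (n + 2) 1 - (n + 2) * (n + 3) * (q (n + 1) 1 + 1 / 2)
        + ((n + 3) * (n + 4) + 1) * q (n + 1) 2 - (n + 2) * (n + 3) / 2 * q n 2 := by
  have h₀ := q_two_recursion n
  have h₁ := q_two_recursion (n + 1)
  have h₂ := q_two_recursion (n + 2)
  have hS₁ := q_one_recursion (n + 1)
  have hS₂ := q_one_recursion (n + 2)
  have hS := iteratedSum_add_two (q · 2) n
  rw [sum_sub_mul_sub_add_one_mul_succ] at h₁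
  rw [sum_sub_mul_sub_add_one_mul_succ (n := n + 1), sum_sub_mul_sub_add_one_mul_succ] at h₂
  push_cast at h₁ h₂ hS₁ hS₂
  linear_combination h₂ - 2 * h₁ + h₀ - 2 * hS₂ + 2 * hS₁ + hS

theorem q_two_eq (n : ℕ) :
    q n 2 = 2 / 9 * H (n + 1) ^ 2 - 2 * (9 * n ^ 2 + 26 * n + 10) / (27 * (n + 2)) * H (n + 1) +
      2 / 9 * H2 (n + 1) + (27 * n ^ 5 + 252 * n ^ 4 + 839 * n ^ 3 + 1146 * n ^ 2 + 484 * n - 48) /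
        (54 * (n + 2) ^ 2 * (n + 3)) := by
  induction n using Nat.twoStepInduction with
  | zero => rw [q_zero_left two_ne_zero]; norm_num [H, H2]
  | one =>
    have h := q_two_recursion 1
    norm_num [iteratedSum, q_zero_left, H, H2, Finset.sum_range_succ] at h ⊢
    linarith
  | more n ih₀ ih₁ =>
    have hdiff := q_two_difference_equation n
    rw [ih₀, ih₁, q_one_eq, q_one_eq, H_succ (n + 2), H_succ (n + 1), H2_succ (n + 1)] at hdiff
    have hn : ((n : ℝ) + 4) * (n + 5) / 2 ≠ 0 := by positivity
    refine mul_left_cancel₀ hn ?_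
    rw [hdiff, H_succ (n + 2), H_succ (n + 1), H2_succ (n + 2), H2_succ (n + 1)]
    push_cast
    field_simp
    ring

lemma integral_V_eq (n : ℕ) : ∫ ω, V n ω ∂P n = q n 1 / (n + 1) := by
  have : (n + 1 : ℝ) ≠ 0 := by positivity
  simp only [q, Nat.choose_one_right, pow_one]
  field_simp
  push_cast
  ring

lemma integral_V_sq_eq (n : ℕ) : ∫ ω, V n ω ^ 2 ∂P n = 2 * q n 2 / ((n + 1) * (n + 2)) := by
  have h : ((n + 2).choose 2 : ℝ) = (n + 1) * (n + 2) / 2 := by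
    rw [Nat.cast_choose_two]
    push_cast
    ring
  simp only [q, h]
  field_simp

end ClosedForms

/-- exact formula for the variance of the area of the random convex chain. -/
theorem stmt15 (n : ℕ) :
    (∫ ω, (volume (Tchain n ω)).toReal ^ 2 ∂ P n)
        - (∫ ω, (volume (Tchain n ω)).toReal ∂ P n) ^ 2
      = (7 * (n : ℝ) ^ 2 + 24 * n + 14) * H (n + 1) /
            (27 * ((n : ℝ) + 1) ^ 2 * ((n : ℝ) + 2) ^ 2)
        - H (n + 1) ^ 2 / (9 * ((n : ℝ) + 1) ^ 2 * ((n : ℝ) + 2))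
        + H2 (n + 1) / (9 * ((n : ℝ) + 1) * ((n : ℝ) + 2))
        - (55 * (n : ℝ) ^ 4 + 391 * (n : ℝ) ^ 3 + 962 * (n : ℝ) ^ 2 + 956 * n + 336) /
            (108 * ((n : ℝ) + 1) ^ 2 * ((n : ℝ) + 2) ^ 3 * ((n : ℝ) + 3)) := by
  have hV (ω : Fin n → ℝ × ℝ) : (volume (Tchain n ω)).toReal = V n ω / 2 := by
    rw [V, mul_div_cancel_left₀ _ two_ne_zero]
  simp only [hV, div_pow, integral_div, integral_V_eq, integral_V_sq_eq, q_one_eq, q_two_eq]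
  field_simp
  ring

end
end

section
/- For every integer n ≥ 1, the probability that all n random points are vertices of the random convex chain is P(N_n = n) = 2^n/(n!·(n+1)!). -/
open MeasureTheory

noncomputable section

/-!
Among interior points of `T` forming a convex chain, the vertex `X = (x, y)` next to `(0, 1)` is the
one minimising `x / (1 - y)`. Let `F` be the point where the line through `(0, 1)` and `X` meets the
first axis. By convexity the other points lie in the triangle with vertices `F`, `(1, 0)`, `X`, and
they complete `X` to a convex chain exactly when the affine map of this triangle onto `T` takes them
to a convex chain in `T`. Summing over which of the `n + 1` points is `X` and integrating over `X`,
the volumes `v n` of the sets of convex chains satisfy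
`v (n + 1) = (n + 1) * v n * ∫_T (y * (1 - x - y) / (1 - y)) ^ n = v n / ((n + 1) * (n + 2))`,
where `y * (1 - x - y) / (1 - y)` is the ratio of the areas of the two triangles.
-/

section ConvexPosition

variable {𝕜 E F ι : Type*} [Ring 𝕜] [PartialOrder 𝕜]
  [AddCommGroup E] [Module 𝕜 E] [AddCommGroup F] [Module 𝕜 F]

variable (𝕜) in
/-- The family `p` is in convex position over `B`: no `p j` lies in the convex hull of `B` and the
other members of the family. For `B = ∅` this is `ConvexIndependent 𝕜 p`; the points of `B`
themselves need not be extreme. -/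
def ConvexIndependentOver (B : Set E) (p : ι → E) : Prop :=
  ∀ j, p j ∉ convexHull 𝕜 (B ∪ p '' {j}ᶜ)

namespace ConvexIndependentOver

variable {B C : Set E} {p : ι → E}

lemma mono (hC : ConvexIndependentOver 𝕜 C p) (h : B ⊆ C) : ConvexIndependentOver 𝕜 B p :=
  fun j hj ↦ hC j (convexHull_mono (Set.union_subset_union_left _ h) hj)

lemma injective (hp : ConvexIndependentOver 𝕜 B p) : Function.Injective p := by
  intro i j hij
  by_contra hne
  exact hp j (subset_convexHull 𝕜 _ (.inr ⟨i, hne, hij⟩))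

end ConvexIndependentOver

lemma convexIndependentOver_comp_affineMap_iff {f : E →ᵃ[𝕜] F} (hf : Function.Injective f)
    {B : Set E} {p : ι → E} :
    ConvexIndependentOver 𝕜 (f '' B) (f ∘ p) ↔ ConvexIndependentOver 𝕜 B p := by
  refine forall_congr' fun j ↦ ?_
  rw [Set.image_comp, ← Set.image_union, ← AffineMap.image_convexHull, Function.comp_apply,
    hf.mem_set_image]

lemma convexIndependentOver_iff_removeNth {n : ℕ} {B : Set E} {p : Fin (n + 1) → E}
    (i : Fin (n + 1)) :
    ConvexIndependentOver 𝕜 B p ↔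
      p i ∉ convexHull 𝕜 (B ∪ Set.range (i.removeNth p)) ∧
        ConvexIndependentOver 𝕜 (insert (p i) B) (i.removeNth p) := by
  have others_i : p '' {i}ᶜ = Set.range (i.removeNth p) := by
    rw [← Fin.range_succAbove, ← Set.range_comp]
    rfl
  have others_k (k : Fin n) :
      B ∪ p '' {i.succAbove k}ᶜ = insert (p i) B ∪ i.removeNth p '' {k}ᶜ := by
    have : ({i.succAbove k}ᶜ : Set (Fin (n + 1))) = insert i (i.succAbove '' {k}ᶜ) := by
      ext j
      cases j using Fin.succAboveCases i <;> simp [Fin.ne_succAbove, (Fin.succAbove_ne _ _)]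
    rw [this, Set.image_insert_eq, Set.image_image, Set.union_insert, Set.insert_union]
    rfl
  unfold ConvexIndependentOver
  rw [Fin.forall_iff_succAbove i, others_i]
  simp only [others_k]
  rfl

end ConvexPosition

section ExtremePoints

variable {𝕜 E ι : Type*} [Field 𝕜] [LinearOrder 𝕜] [IsStrictOrderedRing 𝕜]
  [AddCommGroup E] [Module 𝕜 E]

lemma mem_extremePoints_convexHull_insert {K : Set E} {x : E} (hx : x ∉ convexHull 𝕜 K) :
    x ∈ (convexHull 𝕜 (insert x K)).extremePoints 𝕜 := by
  obtain rfl | hK := K.eq_empty_or_nonempty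
  · simp
  rw [mem_extremePoints_iff_left]
  refine ⟨subset_convexHull 𝕜 _ (Set.mem_insert x K), fun p hp q hq hpq ↦ ?_⟩
  simp only [convexHull_insert hK, convexJoin_singleton_left, Set.mem_iUnion] at hp hq
  obtain ⟨k, hk, a, b, -, hb, hab, rfl⟩ := hp
  obtain ⟨l, hl, c, d, -, hd, hcd, rfl⟩ := hq
  obtain ⟨s, t, hs, ht, hst, hx_eq⟩ := hpq
  obtain hb_pos | rfl := hb.lt_or_eq.imp_right Eq.symm
  swap
  · obtain rfl : a = 1 := by simpa using hab
    simp
  have hw : 0 < s * b + t * d := by positivity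
  obtain rfl : a = 1 - b := by linear_combination hab
  obtain rfl : c = 1 - d := by linear_combination hcd
  obtain rfl : s = 1 - t := by linear_combination hst
  have hcomb : ((1 - t) * b) • k + (t * d) • l = ((1 - t) * b + t * d) • x := by
    linear_combination (norm := module) hx_eq
  refine absurd ?_ hx
  convert convex_iff_div.1 (convex_convexHull 𝕜 K) hk hl
    (show 0 ≤ (1 - t) * b by positivity) (show 0 ≤ t * d by positivity) hw using 1
  rw [← inv_smul_smul₀ hw.ne' x, ← hcomb, smul_add, smul_smul, smul_smul, inv_mul_eq_div,
    inv_mul_eq_div]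

lemma convexIndependentOver_iff_subset_extremePoints {B : Set E} {p : ι → E}
    (hp : Function.Injective p) (hB : Disjoint B (Set.range p)) :
    ConvexIndependentOver 𝕜 B p ↔
      Set.range p ⊆ (convexHull 𝕜 (B ∪ Set.range p)).extremePoints 𝕜 := by
  rw [Set.range_subset_iff]
  refine forall_congr' fun j ↦ ?_
  have others : (B ∪ Set.range p) = insert (p j) (B ∪ p '' {j}ᶜ) := by
    rw [← Set.union_insert, Set.insert_image_compl_eq_range]
  refine ⟨fun h ↦ others ▸ mem_extremePoints_convexHull_insert h, fun h hj ↦ ?_⟩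
  rw [(convex_convexHull 𝕜 _).mem_extremePoints_iff_mem_sdiff_convexHull_sdiff] at h
  refine h.2 (convexHull_mono ?_ hj)
  refine Set.subset_sdiff_singleton ?_ ?_
  · rw [others]
    exact (Set.subset_insert _ _).trans (subset_convexHull 𝕜 _)
  · rintro (hjB | ⟨k, hk, hkj⟩)
    · exact Set.disjoint_right.1 hB ⟨j, rfl⟩ hjB
    · exact hk (hp hkj)

lemma ncard_extremePoints_eq_add_card_iff [Finite ι] {B : Set E} {p : ι → E} (hfin : B.Finite)
    (hB : B ⊆ (convexHull 𝕜 (B ∪ Set.range p)).extremePoints 𝕜)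
    (hdisj : Disjoint B (Set.range p)) :
    ((convexHull 𝕜 (B ∪ Set.range p)).extremePoints 𝕜).ncard = B.ncard + Nat.card ι ↔
      ConvexIndependentOver 𝕜 B p := by
  have hsub : (convexHull 𝕜 (B ∪ Set.range p)).extremePoints 𝕜 ⊆ B ∪ Set.range p :=
    extremePoints_convexHull_subset
  have hrange := Set.finite_range p
  have hunion : (B ∪ Set.range p).ncard = B.ncard + (Set.range p).ncard :=
    Set.ncard_union_eq hdisj hfin hrange
  constructor
  · intro h
    have hle := Set.ncard_le_ncard hsub (hfin.union hrange)
    have hinj : Function.Injective p := by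
      rw [← Set.injOn_univ]
      refine Set.injOn_of_ncard_image_eq (le_antisymm (Set.ncard_image_le Set.finite_univ) ?_)
        Set.finite_univ
      rw [Set.image_univ, Set.ncard_univ]
      lia
    rw [convexIndependentOver_iff_subset_extremePoints hinj hdisj,
      Set.eq_of_subset_of_ncard_le hsub _ (hfin.union hrange)]
    · exact Set.subset_union_right
    · rw [hunion, h, Set.ncard_range_of_injective hinj]
  · intro h
    rw [hsub.antisymm (Set.union_subset hB
      ((convexIndependentOver_iff_subset_extremePoints h.injective hdisj).1 h)), hunion,
      Set.ncard_range_of_injective h.injective]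

end ExtremePoints

section ConvexLemmas

variable {𝕜 E : Type*} [Field 𝕜] [LinearOrder 𝕜] [IsStrictOrderedRing 𝕜]
  [AddCommGroup E] [Module 𝕜 E] {K : Set E}

lemma smul_add_smul_add_smul_mem_of_convex (hK : Convex 𝕜 K) {x y z : E} (hx : x ∈ K) (hy : y ∈ K)
    (hz : z ∈ K) {a b c : 𝕜} (ha : 0 ≤ a) (hb : 0 ≤ b) (hc : 0 ≤ c) (habc : a + b + c = 1) :
    a • x + b • y + c • z ∈ K := by
  have := hK.sum_mem (t := Finset.univ) (w := ![a, b, c]) (z := ![x, y, z])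
    (by simp [Fin.forall_fin_succ, ha, hb, hc]) (by simpa [Fin.sum_univ_three])
    (by simp [Fin.forall_fin_succ, hx, hy, hz])
  simpa [Fin.sum_univ_three] using this

lemma mem_of_mem_segment_of_level_subset (hK : Convex 𝕜 K) (f : E →ᵃ[𝕜] 𝕜) {a q z : E} {t : 𝕜}
    (hq : q ∈ K) (hz : z ∈ segment 𝕜 a q) (hzt : f z ≤ t) (hta : t ≤ f a)
    (hlevel : ∀ r ∈ segment 𝕜 a q, f r = t → r ∈ K) : z ∈ K := by
  obtain ⟨r, hr, hrt⟩ : t ∈ f '' segment 𝕜 a z := by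
    rw [image_segment, segment_symm, segment_eq_Icc (hzt.trans hta)]
    exact ⟨hzt, hta⟩
  rw [mem_segment_iff_wbtw] at hz hr
  have hrK : r ∈ K := hlevel r (mem_segment_iff_wbtw.2 (hz.trans_left hr)) hrt
  exact hK.segment_subset hrK hq (mem_segment_iff_wbtw.2 (hz.trans_left_right hr))

end ConvexLemmas

section Triangle

lemma convex_T : Convex ℝ T := convex_convexHull ℝ _

lemma mem_T_iff_s16 {p : ℝ × ℝ} : p ∈ T ↔ 0 ≤ p.1 ∧ 0 ≤ p.2 ∧ p.1 + p.2 ≤ 1 := by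
  constructor
  · have hconv : Convex ℝ {p : ℝ × ℝ | 0 ≤ p.1 ∧ 0 ≤ p.2 ∧ p.1 + p.2 ≤ 1} :=
      (convex_halfSpace_ge (LinearMap.fst ℝ ℝ ℝ).isLinear 0).inter <|
        (convex_halfSpace_ge (LinearMap.snd ℝ ℝ ℝ).isLinear 0).inter <|
          convex_halfSpace_le (LinearMap.fst ℝ ℝ ℝ + LinearMap.snd ℝ ℝ ℝ).isLinear 1
    refine fun hp ↦ convexHull_min ?_ hconv hp
    rintro _ (rfl | rfl | rfl) <;> norm_num
  · rintro ⟨h1, h2, h3⟩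
    have hvert : {((0 : ℝ), (0 : ℝ)), (1, 0), (0, 1)} ⊆ T := subset_convexHull ℝ _
    have := smul_add_smul_add_smul_mem_of_convex convex_T (hvert (.inl rfl))
      (hvert (.inr (.inl rfl))) (hvert (.inr (.inr rfl))) (sub_nonneg.2 h3) h1 h2 (by ring)
    simpa using this

lemma mem_interior_T_iff {p : ℝ × ℝ} : p ∈ interior T ↔ 0 < p.1 ∧ 0 < p.2 ∧ p.1 + p.2 < 1 := by
  have hT : T = Prod.fst ⁻¹' Set.Ici (0 : ℝ) ∩ (Prod.snd ⁻¹' Set.Ici (0 : ℝ) ∩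
      (ContinuousLinearMap.fst ℝ ℝ ℝ + ContinuousLinearMap.snd ℝ ℝ ℝ) ⁻¹' Set.Iic 1) := by
    ext p
    exact mem_T_iff_s16
  have hadd : Function.Surjective (ContinuousLinearMap.fst ℝ ℝ ℝ + ContinuousLinearMap.snd ℝ ℝ ℝ) :=
    fun a ↦ ⟨(a, 0), by simp⟩
  rw [hT, interior_inter, interior_inter,
    ← isOpenMap_fst.preimage_interior_eq_interior_preimage continuous_fst,
    ← isOpenMap_snd.preimage_interior_eq_interior_preimage continuous_snd,
    ← (ContinuousLinearMap.isOpenMap _ hadd).preimage_interior_eq_interior_preimage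
      (ContinuousLinearMap.continuous _), interior_Ici, interior_Iic]
  rfl

lemma corners_subset_T : {((1 : ℝ), (0 : ℝ)), (0, 1)} ⊆ T := by
  rintro _ (rfl | rfl) <;> norm_num [mem_T_iff_s16]

lemma corners_subset_extremePoints_T :
    {((1 : ℝ), (0 : ℝ)), (0, 1)} ⊆ T.extremePoints ℝ := by
  rintro _ (rfl | rfl)
  · rw [T, Set.insert_comm]
    refine mem_extremePoints_convexHull_insert fun h ↦ ?_
    have := convexHull_min (t := {p : ℝ × ℝ | p.1 ≤ 0}) (by rintro _ (rfl | rfl) <;> simp)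
      (convex_halfSpace_le (LinearMap.fst ℝ ℝ ℝ).isLinear 0) h
    norm_num at this
  · rw [T, Set.pair_comm, Set.insert_comm]
    refine mem_extremePoints_convexHull_insert fun h ↦ ?_
    have := convexHull_min (t := {p : ℝ × ℝ | p.2 ≤ 0}) (by rintro _ (rfl | rfl) <;> simp)
      (convex_halfSpace_le (LinearMap.snd ℝ ℝ ℝ).isLinear 0) h
    norm_num at this

lemma disjoint_corners_interior_T : Disjoint {((1 : ℝ), (0 : ℝ)), (0, 1)} (interior T) := by
  simp [mem_interior_T_iff]

lemma N_eq_iff_convexIndependentOver {n : ℕ} {ω : Fin n → ℝ × ℝ} (hω : ∀ j, ω j ∈ interior T) :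
    N n ω = n ↔ ConvexIndependentOver ℝ {(1, 0), (0, 1)} ω := by
  have hrange : Set.range ω ⊆ interior T := Set.range_subset_iff.2 hω
  have hchain : Tchain n ω = convexHull ℝ ({(1, 0), (0, 1)} ∪ Set.range ω) := by
    rw [Tchain, Set.union_comm]
  have hchain_T : Tchain n ω ⊆ T := by
    rw [hchain]
    exact convexHull_min (Set.union_subset corners_subset_T (hrange.trans interior_subset)) convex_T
  have hcorners : {(1, 0), (0, 1)} ⊆ (Tchain n ω).extremePoints ℝ := fun p hp ↦
    inter_extremePoints_subset_extremePoints_of_subset hchain_T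
      ⟨hchain ▸ subset_convexHull ℝ _ (.inl hp), corners_subset_extremePoints_T hp⟩
  have hcard : ({(1, 0), (0, 1)} : Set (ℝ × ℝ)).ncard = 2 := Set.ncard_pair (by simp)
  have hfin : ((Tchain n ω).extremePoints ℝ).Finite :=
    .subset (.union (Set.toFinite _) (Set.finite_range ω))
      (hchain ▸ extremePoints_convexHull_subset)
  have htwo := Set.ncard_le_ncard hcorners hfin
  rw [hchain] at hcorners htwo
  rw [← ncard_extremePoints_eq_add_card_iff (Set.toFinite _) hcorners
    (disjoint_corners_interior_T.mono_right hrange), N, hchain, hcard, Nat.card_fin]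
  lia

end Triangle

section Apex

variable {α : ℝ} {S : Set (ℝ × ℝ)}

lemma zero_one_notMem_convexHull_insert_apex (hα : 1 < α) (hne : S.Nonempty)
    (hS : ∀ z ∈ S, 0 < z.1) : (0, 1) ∉ convexHull ℝ (insert (0, α) S) := by
  rw [convexHull_insert hne]
  simp only [convexJoin_singleton_left, Set.mem_iUnion]
  rintro ⟨q, hq, a, b, -, -, hab, h⟩
  have hq0 : 0 < q.1 := convexHull_min hS (convex_halfSpace_gt (LinearMap.fst ℝ ℝ ℝ).isLinear 0) hq
  obtain ⟨hfst, hsnd⟩ := Prod.ext_iff.1 h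
  obtain rfl : b = 0 := by simpa [hq0.ne'] using hfst
  obtain rfl : a = 1 := by simpa using hab
  simp [hα.ne'] at hsnd

lemma mem_convexHull_of_mem_convexHull_insert_apex (hα : 1 ≤ α) (hS : S ⊆ T)
    (hcorners : {(1, 0), (0, 1)} ⊆ S) {z : ℝ × ℝ} (hz : z ∈ T)
    (h : z ∈ convexHull ℝ (insert (0, α) S)) : z ∈ convexHull ℝ S := by
  obtain ⟨hone, htwo⟩ := Set.pair_subset_iff.1 (hcorners.trans (subset_convexHull ℝ S))
  rw [convexHull_insert ⟨_, hcorners (.inl rfl)⟩] at h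
  simp only [convexJoin_singleton_left, Set.mem_iUnion] at h
  obtain ⟨q, hq, hzq⟩ := h
  obtain ⟨hq1, hq2, -⟩ := mem_T_iff_s16.1 (convexHull_min hS convex_T hq)
  -- The segment from the apex to `q` crosses the line `x + y = 1` between the two corners.
  refine mem_of_mem_segment_of_level_subset (convex_convexHull ℝ S)
    (LinearMap.fst ℝ ℝ ℝ + LinearMap.snd ℝ ℝ ℝ).toAffineMap hq hzq (mem_T_iff_s16.1 hz).2.2
    (by simpa using hα) ?_
  rintro _ ⟨a, b, ha, hb, -, rfl⟩ hr
  refine (convex_convexHull ℝ S).segment_subset hone htwo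
    ⟨b * q.1, a * α + b * q.2, by positivity, by positivity, ?_, ?_⟩
  · simpa [add_left_comm] using hr
  · ext <;> simp

lemma mem_convexHull_apex_of_one_le_add (hα : 1 < α) {z : ℝ × ℝ} (hz : 0 ≤ z.1)
    (hone : 1 ≤ z.1 + z.2) (hzα : z.1 * α + z.2 ≤ α) :
    z ∈ convexHull ℝ {(0, α), (1, 0), (0, 1)} := by
  have hα' : 0 < α - 1 := sub_pos.2 hα
  have hvert := subset_convexHull ℝ {((0 : ℝ), α), (1, 0), (0, 1)}
  have := smul_add_smul_add_smul_mem_of_convex (convex_convexHull ℝ _) (hvert (.inl rfl))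
    (hvert (.inr (.inl rfl))) (hvert (.inr (.inr rfl)))
    (a := (z.1 + z.2 - 1) / (α - 1)) (b := z.1) (c := (α - z.1 * α - z.2) / (α - 1))
    (div_nonneg (by linarith) hα'.le) hz (div_nonneg (by linarith) hα'.le) (by field_simp; ring)
  convert this using 1
  ext
  · simp
  · simp only [Prod.snd_add, Prod.smul_snd, smul_eq_mul]
    field_simp
    ring

lemma convexIndependentOver_apex_iff {ι : Type*} (hα : 1 < α) {Z : ι → ℝ × ℝ}
    (hfst : ∀ k, 0 ≤ (Z k).1) (hsnd : ∀ k, 0 < (Z k).2) (hhyp : ∀ k, (Z k).1 * α + (Z k).2 < α) :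
    ((0, 1) ∉ convexHull ℝ ({(1, 0), (0, α)} ∪ Set.range Z) ∧
        ConvexIndependentOver ℝ {(0, 1), (1, 0), (0, α)} Z) ↔
      (∀ k, Z k ∈ interior T) ∧ ConvexIndependentOver ℝ {(1, 0), (0, 1)} Z := by
  constructor
  · rintro ⟨hcorner, hind⟩
    have hsum (k) : (Z k).1 + (Z k).2 < 1 := by
      by_contra! h
      have := mem_convexHull_apex_of_one_le_add hα (hfst k) h (hhyp k).le
      exact hind k (convexHull_mono (by grind) this)
    have hpos (k) : 0 < (Z k).1 := by
      refine (hfst k).lt_of_ne' fun h ↦ ?_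
      have hZ : Z k = (0, (Z k).2) := Prod.ext h rfl
      have hlt : (Z k).2 < 1 := by simpa [h] using hsum k
      have hmem : ((0 : ℝ), (1 : ℝ)) ∈ segment ℝ (Z k) (0, α) := by
        rw [hZ, ← Prod.image_mk_segment_right, segment_eq_Icc (hlt.trans hα).le]
        exact ⟨1, ⟨hlt.le, hα.le⟩, rfl⟩
      exact hcorner (segment_subset_convexHull (.inr ⟨k, rfl⟩) (by simp) hmem)
    exact ⟨fun k ↦ mem_interior_T_iff.2 ⟨hpos k, hsnd k, hsum k⟩, hind.mono (by grind)⟩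
  · rintro ⟨hT, hind⟩
    refine ⟨?_, fun k hk ↦ hind k ?_⟩
    · rw [Set.pair_comm, Set.insert_union]
      refine zero_one_notMem_convexHull_insert_apex hα (by simp) ?_
      rintro z (rfl | ⟨k, rfl⟩)
      · exact one_pos
      · exact (mem_interior_T_iff.1 (hT k)).1
    · refine mem_convexHull_of_mem_convexHull_insert_apex hα.le
        (Set.union_subset corners_subset_T ?_) Set.subset_union_left (interior_subset (hT k))
        (convexHull_mono (by grind) hk)
      rintro _ ⟨j, -, rfl⟩
      exact interior_subset (hT j)

end Apex

section Normalization

/-- The affine map fixing `(1, 0)`, taking `X` to `(0, 1)` and the point where the line through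
`(0, 1)` and `X` meets the first axis to `(0, 0)`. It maps onto `T` the triangle that contains the
other vertices of a convex chain whose vertex next to `(0, 1)` is `X`. -/
def normalization (X : ℝ × ℝ) : (ℝ × ℝ) →ᵃ[ℝ] (ℝ × ℝ) where
  toFun p := ((p.1 * (1 - X.2) - X.1 * (1 - p.2)) / (1 - X.1 - X.2), p.2 / X.2)
  linear := Matrix.toLin (Module.Basis.finTwoProd ℝ) (Module.Basis.finTwoProd ℝ)
    !![(1 - X.2) / (1 - X.1 - X.2), X.1 / (1 - X.1 - X.2); 0, 1 / X.2]
  map_vadd' p v := by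
    ext
    · simp [Matrix.toLin_finTwoProd_apply]
      ring
    · simp [Matrix.toLin_finTwoProd_apply]
      ring

lemma normalization_apply (X p : ℝ × ℝ) : normalization X p =
    ((p.1 * (1 - X.2) - X.1 * (1 - p.2)) / (1 - X.1 - X.2), p.2 / X.2) := rfl

lemma det_normalization_linear (X : ℝ × ℝ) :
    LinearMap.det (normalization X).linear = (1 - X.2) / (X.2 * (1 - X.1 - X.2)) := by
  simp [normalization, Matrix.det_fin_two, div_eq_mul_inv, mul_comm, mul_left_comm]

variable {X p : ℝ × ℝ}

lemma normalization_zero_one (X : ℝ × ℝ) : normalization X (0, 1) = (0, X.2⁻¹) := by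
  simp [normalization_apply]

lemma normalization_one_zero (hX : X ∈ interior T) : normalization X (1, 0) = (1, 0) := by
  obtain ⟨-, -, h⟩ := mem_interior_T_iff.1 hX
  have : 1 - X.1 - X.2 ≠ 0 := by linarith
  simp only [normalization_apply, zero_div]
  congr 1
  field_simp
  ring

lemma normalization_self (hX : X ∈ interior T) : normalization X X = (0, 1) := by
  simp [normalization_apply, (mem_interior_T_iff.1 hX).2.1.ne']

lemma normalization_fst_nonneg_iff (hX : X ∈ interior T) :
    0 ≤ (normalization X p).1 ↔ X.1 * (1 - p.2) ≤ p.1 * (1 - X.2) := by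
  obtain ⟨-, -, h⟩ := mem_interior_T_iff.1 hX
  rw [normalization_apply, le_div_iff₀ (by linarith), zero_mul, sub_nonneg]

lemma normalization_fst_pos_iff (hX : X ∈ interior T) :
    0 < (normalization X p).1 ↔ X.1 * (1 - p.2) < p.1 * (1 - X.2) := by
  obtain ⟨-, -, h⟩ := mem_interior_T_iff.1 hX
  rw [normalization_apply, div_pos_iff_of_pos_right (by linarith), sub_pos]

lemma normalization_snd_pos_iff (hX : X ∈ interior T) : 0 < (normalization X p).2 ↔ 0 < p.2 :=
  div_pos_iff_of_pos_right (mem_interior_T_iff.1 hX).2.1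

lemma one_sub_normalization_fst_sub (hX : X ∈ interior T) :
    1 - (normalization X p).1 - p.2 = (1 - X.2) * (1 - p.1 - p.2) / (1 - X.1 - X.2) := by
  obtain ⟨-, -, h⟩ := mem_interior_T_iff.1 hX
  have : 1 - X.1 - X.2 ≠ 0 := by linarith
  rw [normalization_apply]
  field_simp
  ring

lemma normalization_fst_add_lt_one_iff (hX : X ∈ interior T) :
    (normalization X p).1 + p.2 < 1 ↔ p.1 + p.2 < 1 := by
  obtain ⟨h1, -, h3⟩ := mem_interior_T_iff.1 hX
  have hd : 0 < 1 - X.1 - X.2 := by linarith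
  have hy : 0 < 1 - X.2 := by linarith
  rw [← sub_pos, ← sub_sub, one_sub_normalization_fst_sub hX, div_pos_iff_of_pos_right hd,
    mul_pos_iff_of_pos_left hy, sub_sub, sub_pos]

lemma det_normalization_linear_pos (hX : X ∈ interior T) :
    0 < LinearMap.det (normalization X).linear := by
  obtain ⟨h1, h2, h3⟩ := mem_interior_T_iff.1 hX
  rw [det_normalization_linear]
  exact div_pos (by linarith) (mul_pos h2 (by linarith))

lemma normalization_injective (hX : X ∈ interior T) : Function.Injective (normalization X) := by
  rw [← AffineMap.linear_injective_iff]
  exact (LinearMap.equivOfDetNeZero _ (det_normalization_linear_pos hX).ne').injective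

lemma mem_interior_T_of_normalization_mem (hX : X ∈ interior T)
    (hp : normalization X p ∈ interior T) : p ∈ interior T := by
  obtain ⟨hX1, hX2, hX3⟩ := mem_interior_T_iff.1 hX
  obtain ⟨h1, h2, h3⟩ := mem_interior_T_iff.1 hp
  have hp2 : 0 < p.2 := (normalization_snd_pos_iff hX).1 h2
  have hp_le : p.2 ≤ (normalization X p).2 := le_div_self hp2.le hX2 (by linarith)
  have hsum : p.1 + p.2 < 1 := (normalization_fst_add_lt_one_iff hX).1 (by linarith)
  have hp1 : 0 < p.1 * (1 - X.2) :=
    (mul_pos hX1 (by linarith)).trans ((normalization_fst_pos_iff hX).1 h1)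
  exact mem_interior_T_iff.2 ⟨pos_of_mul_pos_left hp1 (by linarith), hp2, hsum⟩

end Normalization

section Recursion

variable {n : ℕ}

/-- The configurations of `n` points in the interior of `T` that form a convex chain: all of them
are vertices of their convex hull with the corners `(1, 0)` and `(0, 1)`. -/
def convexConfigs (n : ℕ) : Set (Fin n → ℝ × ℝ) :=
  {ω | (∀ j, ω j ∈ interior T) ∧ ConvexIndependentOver ℝ {(1, 0), (0, 1)} ω}

/-- The pairs `(X, Y)` such that `X` and the points of `Y` form a convex chain in which `X` is the
vertex adjacent to `(0, 1)`. -/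
def firstVertexConfigs (n : ℕ) : Set ((ℝ × ℝ) × (Fin n → ℝ × ℝ)) :=
  {p | p.1 ∈ interior T ∧ normalization p.1 ∘ p.2 ∈ convexConfigs n}

lemma mem_convexConfigs_iff_normalization {X : ℝ × ℝ} {Z : Fin n → ℝ × ℝ} (hX : X ∈ interior T)
    (hfst : ∀ k, 0 ≤ (normalization X (Z k)).1) (hZ : ∀ k, Z k ∈ interior T) :
    normalization X ∘ Z ∈ convexConfigs n ↔
      X ∉ convexHull ℝ ({(1, 0), (0, 1)} ∪ Set.range Z) ∧
        ConvexIndependentOver ℝ {X, (1, 0), (0, 1)} Z := by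
  obtain ⟨hX1, hX2, hX3⟩ := mem_interior_T_iff.1 hX
  have hinj := normalization_injective hX
  have hhyp (k) : (normalization X (Z k)).1 * X.2⁻¹ + (normalization X (Z k)).2 < X.2⁻¹ := by
    have := (normalization_fst_add_lt_one_iff hX).2 (mem_interior_T_iff.1 (hZ k)).2.2
    calc (normalization X (Z k)).1 * X.2⁻¹ + (Z k).2 / X.2
        = ((normalization X (Z k)).1 + (Z k).2) * X.2⁻¹ := by ring
      _ < X.2⁻¹ := mul_lt_of_lt_one_left (inv_pos.2 hX2) this
  have := convexIndependentOver_apex_iff ((one_lt_inv₀ hX2).2 (by linarith)) hfst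
    (fun k ↦ (normalization_snd_pos_iff hX).2 (mem_interior_T_iff.1 (hZ k)).2.1) hhyp
  rw [← convexIndependentOver_comp_affineMap_iff hinj, ← hinj.mem_set_image,
    AffineMap.image_convexHull, Set.image_union, Set.image_pair, Set.image_insert_eq,
    Set.image_pair, ← Set.range_comp, normalization_zero_one, normalization_one_zero hX,
    normalization_self hX]
  exact this.symm

lemma mem_convexConfigs_succ_iff_of_fst_nonneg {ω : Fin (n + 1) → ℝ × ℝ} {i : Fin (n + 1)}
    (hω : ∀ j, ω j ∈ interior T) (hfst : ∀ k, 0 ≤ (normalization (ω i) (i.removeNth ω k)).1) :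
    ω ∈ convexConfigs (n + 1) ↔ (ω i, i.removeNth ω) ∈ firstVertexConfigs n := by
  rw [firstVertexConfigs, Set.mem_ofPred_eq, and_iff_right (hω i),
    mem_convexConfigs_iff_normalization (hω i) hfst fun k ↦ hω _,
    ← convexIndependentOver_iff_removeNth i]
  exact and_iff_right hω

lemma mem_convexConfigs_succ_iff {ω : Fin (n + 1) → ℝ × ℝ} :
    ω ∈ convexConfigs (n + 1) ↔ ∃ i : Fin (n + 1), (ω i, i.removeNth ω) ∈ firstVertexConfigs n := by
  constructor
  · intro h
    have hT := h.1
    obtain ⟨i, hi⟩ := Finite.exists_min fun i ↦ (ω i).1 / (1 - (ω i).2)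
    have hslope (j) : 0 < 1 - (ω j).2 := by linarith [mem_interior_T_iff.1 (hT j)]
    refine ⟨i, (mem_convexConfigs_succ_iff_of_fst_nonneg hT fun k ↦ ?_).1 h⟩
    exact (normalization_fst_nonneg_iff (hT i)).2 ((div_le_div_iff₀ (hslope i) (hslope _)).1 (hi _))
  · rintro ⟨i, hX, hrest⟩
    refine (mem_convexConfigs_succ_iff_of_fst_nonneg ?_ fun k ↦ ?_).2 ⟨hX, hrest⟩
    · exact (Fin.forall_iff_succAbove i).2
        ⟨hX, fun k ↦ mem_interior_T_of_normalization_mem hX (hrest.1 k)⟩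
    · exact (mem_interior_T_iff.1 (hrest.1 k)).1.le

lemma convexConfigs_succ (n : ℕ) : convexConfigs (n + 1) =
    ⋃ i, MeasurableEquiv.piFinSuccAbove (fun _ ↦ ℝ × ℝ) i ⁻¹' firstVertexConfigs n := by
  ext ω
  rw [mem_convexConfigs_succ_iff, Set.mem_iUnion]
  rfl

lemma fst_mul_lt_fst_mul_of_mem_firstVertexConfigs {ω : Fin (n + 1) → ℝ × ℝ} {i j : Fin (n + 1)}
    (h : (ω i, i.removeNth ω) ∈ firstVertexConfigs n) (hij : j ≠ i) :
    (ω i).1 * (1 - (ω j).2) < (ω j).1 * (1 - (ω i).2) := by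
  obtain ⟨k, rfl⟩ := Fin.exists_succAbove_eq hij
  exact (normalization_fst_pos_iff h.1).1 (mem_interior_T_iff.1 (h.2.1 k)).1

lemma pairwise_disjoint_preimage_firstVertexConfigs (n : ℕ) :
    Pairwise (Function.onFun Disjoint fun i ↦
      MeasurableEquiv.piFinSuccAbove (fun _ ↦ ℝ × ℝ) i ⁻¹' firstVertexConfigs n) :=
  fun _ _ hij ↦ Set.disjoint_left.2 fun _ hi hj ↦
    (fst_mul_lt_fst_mul_of_mem_firstVertexConfigs hi hij.symm).asymm
      (fst_mul_lt_fst_mul_of_mem_firstVertexConfigs hj hij)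

lemma measurableSet_firstVertexConfigs (h : MeasurableSet (convexConfigs n)) :
    MeasurableSet (firstVertexConfigs n) := by
  have hmeas : Measurable fun p : (ℝ × ℝ) × (Fin n → ℝ × ℝ) ↦ normalization p.1 ∘ p.2 := by
    refine measurable_pi_lambda _ fun j ↦ ?_
    simp only [Function.comp_apply, normalization_apply]
    fun_prop
  exact (measurable_fst measurableSet_interior).inter (hmeas h)

lemma measurableSet_convexConfigs (n : ℕ) : MeasurableSet (convexConfigs n) := by
  induction n with
  | zero => exact (Set.toFinite _).measurableSet
  | succ n ih =>
    rw [convexConfigs_succ]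
    exact .iUnion fun i ↦ (MeasurableEquiv.measurable _) (measurableSet_firstVertexConfigs ih)

end Recursion

section Pushforward

lemma pi_smul_eq_pow_smul_pi {ι α : Type*} [Fintype ι] [MeasurableSpace α] (c : NNReal)
    (μ : Measure α) [SigmaFinite μ] :
    Measure.pi (fun _ : ι ↦ (c : ENNReal) • μ) =
      (c : ENNReal) ^ Fintype.card ι • Measure.pi fun _ ↦ μ := by
  have : SigmaFinite ((c : ENNReal) • μ) := inferInstanceAs (SigmaFinite (c • μ))
  refine Measure.pi_eq fun s _ ↦ ?_
  simp [Measure.pi_pi, Finset.prod_mul_distrib]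

variable {E : Type*} [NormedAddCommGroup E] [NormedSpace ℝ E] [FiniteDimensional ℝ E]
  [MeasurableSpace E] [BorelSpace E]

lemma map_affineMap_addHaar_eq_smul_addHaar (μ : Measure E) [μ.IsAddHaarMeasure] {f : E →ᵃ[ℝ] E}
    (hf : LinearMap.det f.linear ≠ 0) :
    μ.map f = ENNReal.ofReal |(LinearMap.det f.linear)⁻¹| • μ := by
  have hlin : Measurable f.linear := f.linear.continuous_of_finiteDimensional.measurable
  have hcomp : (f : E → E) = (· + f 0) ∘ f.linear := f.decomp
  rw [hcomp, ← Measure.map_map (measurable_add_const _) hlin,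
    Measure.map_linearMap_addHaar_eq_smul_addHaar _ hf, Measure.map_smul, map_add_right_eq_self]

lemma pi_preimage_comp_affineMap {ι : Type*} [Fintype ι] (μ : Measure E) [μ.IsAddHaarMeasure]
    {f : E →ᵃ[ℝ] E} (hf : LinearMap.det f.linear ≠ 0) {S : Set (ι → E)} (hS : MeasurableSet S) :
    Measure.pi (fun _ ↦ μ) ((f ∘ ·) ⁻¹' S) =
      ENNReal.ofReal |(LinearMap.det f.linear)⁻¹| ^ Fintype.card ι * Measure.pi (fun _ ↦ μ) S := by
  have hmeas : Measurable f := f.continuous_of_finiteDimensional.measurable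
  have hmap := map_affineMap_addHaar_eq_smul_addHaar μ hf
  have : SigmaFinite (μ.map f) := by
    rw [hmap]
    exact inferInstanceAs (SigmaFinite (|(LinearMap.det f.linear)⁻¹|.toNNReal • μ))
  calc Measure.pi (fun _ ↦ μ) ((f ∘ ·) ⁻¹' S)
      = (Measure.pi fun _ ↦ μ).map (fun Y i ↦ f (Y i)) S :=
        (Measure.map_apply (measurable_pi_lambda _ fun i ↦ hmeas.comp (measurable_pi_apply i))
          hS).symm
    _ = Measure.pi (fun _ ↦ μ.map f) S := by rw [Measure.pi_map_pi fun _ ↦ hmeas.aemeasurable]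
    _ = _ := by
        rw [hmap, ENNReal.ofReal, pi_smul_eq_pow_smul_pi, Measure.smul_apply, smul_eq_mul]

end Pushforward

section UniformLaw

lemma interior_T_ae_eq_T : (interior T : Set (ℝ × ℝ)) =ᵐ[volume] T :=
  interior_ae_eq_of_null_frontier (convex_T.addHaar_frontier volume)

lemma P_eq_smul_restrict (n : ℕ) :
    P n = (2 : ENNReal) ^ n • volume.restrict (Set.univ.pi fun _ ↦ interior T) := by
  have hμT : μT = ((2 : NNReal) : ENNReal) • volume.restrict (interior T) := by
    rw [μT, Measure.restrict_congr_set interior_T_ae_eq_T]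
    rfl
  rw [P, hμT, pi_smul_eq_pow_smul_pi, volume_pi, Measure.restrict_pi_pi, Fintype.card_fin]
  rfl

end UniformLaw

section Integrals

lemma setLIntegral_Ioo_ofReal {f : ℝ → ℝ} {a b : ℝ} (hab : a ≤ b)
    (hf : IntervalIntegrable f volume a b) (hnonneg : ∀ x ∈ Set.Ioo a b, 0 ≤ f x) :
    ∫⁻ x in Set.Ioo a b, ENNReal.ofReal (f x) = ENNReal.ofReal (∫ x in a..b, f x) := by
  rw [intervalIntegral.integral_of_le hab, integral_Ioc_eq_integral_Ioo,
    ofReal_integral_eq_lintegral_ofReal]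
  · exact (intervalIntegrable_iff_integrableOn_Ioo_of_le hab).1 hf
  · exact (ae_restrict_iff' measurableSet_Ioo).2 (.of_forall hnonneg)

lemma setLIntegral_prod_eq_lintegral_slice {α β : Type*} [MeasurableSpace α] [MeasurableSpace β]
    {μ : Measure α} {ν : Measure β} [SFinite μ] [SFinite ν] {s : Set (α × β)}
    (hs : MeasurableSet s) {f : α × β → ENNReal} (hf : Measurable f) :
    ∫⁻ p in s, f p ∂μ.prod ν = ∫⁻ y, ∫⁻ x in (·, y) ⁻¹' s, f (x, y) ∂μ ∂ν := by
  rw [← lintegral_indicator hs, lintegral_prod_symm' _ (hf.indicator hs)]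
  refine lintegral_congr fun y ↦ ?_
  rw [← lintegral_indicator (measurable_prodMk_right hs)]
  rfl

lemma setLIntegral_interior_T {f : ℝ × ℝ → ENNReal} (hf : Measurable f) :
    ∫⁻ p in interior T, f p =
      ∫⁻ y in Set.Ioo (0 : ℝ) 1, ∫⁻ x in Set.Ioo 0 (1 - y), f (x, y) := by
  rw [Measure.volume_eq_prod,
    setLIntegral_prod_eq_lintegral_slice measurableSet_interior hf,
    ← lintegral_indicator measurableSet_Ioo]
  refine lintegral_congr fun y ↦ ?_
  by_cases hy : y ∈ Set.Ioo (0 : ℝ) 1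
  · have hslice : (·, y) ⁻¹' interior T = Set.Ioo 0 (1 - y) := by
      ext x
      simp [mem_interior_T_iff, hy.1, lt_sub_iff_add_lt]
    rw [Set.indicator_of_mem hy, hslice]
  · have hslice : (·, y) ⁻¹' interior T = ∅ := by
      refine Set.eq_empty_of_forall_notMem fun x hx ↦ hy ?_
      obtain ⟨h1, h2, h3⟩ := mem_interior_T_iff.1 hx
      exact ⟨h2, by linarith⟩
    rw [Set.indicator_of_notMem hy, hslice, setLIntegral_empty]

lemma integral_mul_sub_div_pow {y : ℝ} (hy : y < 1) (n : ℕ) :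
    ∫ x in 0..1 - y, (y * (1 - x - y) / (1 - y)) ^ n = y ^ n * (1 - y) / (n + 1) := by
  have hy' : 1 - y ≠ 0 := by linarith
  calc ∫ x in 0..1 - y, (y * (1 - x - y) / (1 - y)) ^ n
      = ∫ x in 0..1 - y, (y / (1 - y)) ^ n * (1 - y - x) ^ n := by
        congr! 2 with x
        rw [← mul_pow]
        ring
    _ = (y / (1 - y)) ^ n * ((1 - y) ^ (n + 1) / (n + 1)) := by
        rw [intervalIntegral.integral_const_mul,
          intervalIntegral.integral_comp_sub_left fun x ↦ x ^ n]
        simp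
    _ = y ^ n * (1 - y) / (n + 1) := by
        rw [div_pow]
        field_simp
        ring

lemma integral_pow_mul_one_sub_div (n : ℕ) :
    ∫ y in (0 : ℝ)..1, y ^ n * (1 - y) / (n + 1) = 1 / ((n + 1) ^ 2 * (n + 2)) := by
  calc ∫ y in (0 : ℝ)..1, y ^ n * (1 - y) / (n + 1)
      = ∫ y in (0 : ℝ)..1, (1 / (n + 1)) * (y ^ n - y ^ (n + 1)) := by
        congr! 2 with y
        ring
    _ = 1 / (n + 1) * (1 / (n + 1) - 1 / (n + 1 + 1)) := by
        rw [intervalIntegral.integral_const_mul, intervalIntegral.integral_sub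
          (Continuous.intervalIntegrable (by fun_prop) _ _)
          (Continuous.intervalIntegrable (by fun_prop) _ _), integral_pow, integral_pow]
        simp
    _ = 1 / ((n + 1) ^ 2 * (n + 2)) := by
        field_simp
        ring

lemma setLIntegral_interior_T_abs_inv_det_normalization_pow (n : ℕ) :
    ∫⁻ X in interior T, ENNReal.ofReal |(LinearMap.det (normalization X).linear)⁻¹| ^ n =
      ENNReal.ofReal (1 / ((n + 1) ^ 2 * (n + 2))) := by
  have hjac (X) (hX : X ∈ interior T) : |(LinearMap.det (normalization X).linear)⁻¹| =
      X.2 * (1 - X.1 - X.2) / (1 - X.2) := by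
    rw [abs_of_pos (inv_pos.2 (det_normalization_linear_pos hX)), det_normalization_linear, inv_div]
  calc ∫⁻ X in interior T, ENNReal.ofReal |(LinearMap.det (normalization X).linear)⁻¹| ^ n
      = ∫⁻ X in interior T, ENNReal.ofReal (X.2 * (1 - X.1 - X.2) / (1 - X.2)) ^ n :=
        setLIntegral_congr_fun measurableSet_interior fun X hX ↦ by rw [hjac X hX]
    _ = ∫⁻ y in Set.Ioo (0 : ℝ) 1, ∫⁻ x in Set.Ioo 0 (1 - y),
          ENNReal.ofReal (y * (1 - x - y) / (1 - y)) ^ n := setLIntegral_interior_T (by fun_prop)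
    _ = ∫⁻ y in Set.Ioo (0 : ℝ) 1, ENNReal.ofReal (y ^ n * (1 - y) / (n + 1)) := by
        refine setLIntegral_congr_fun measurableSet_Ioo fun y hy ↦ ?_
        have hnonneg (x) (hx : x ∈ Set.Ioo 0 (1 - y)) : 0 ≤ y * (1 - x - y) / (1 - y) :=
          div_nonneg (mul_nonneg hy.1.le (by linarith [hx.2])) (sub_pos.2 hy.2).le
        rw [← integral_mul_sub_div_pow hy.2, ← setLIntegral_Ioo_ofReal (sub_pos.2 hy.2).le
          (Continuous.intervalIntegrable (by fun_prop) _ _) fun x hx ↦ pow_nonneg (hnonneg x hx) n]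
        exact setLIntegral_congr_fun measurableSet_Ioo fun x hx ↦
          (ENNReal.ofReal_pow (hnonneg x hx) n).symm
    _ = ENNReal.ofReal (1 / ((n + 1) ^ 2 * (n + 2))) := by
        rw [setLIntegral_Ioo_ofReal zero_le_one (Continuous.intervalIntegrable (by fun_prop) _ _),
          integral_pow_mul_one_sub_div]
        exact fun y hy ↦ div_nonneg (mul_nonneg (pow_nonneg hy.1.le n) (sub_pos.2 hy.2).le)
          (by positivity)

end Integrals

section Volume

lemma volume_firstVertexConfigs (n : ℕ) : volume (firstVertexConfigs n) =
    ENNReal.ofReal (1 / ((n + 1) ^ 2 * (n + 2))) * volume (convexConfigs n) := by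
  have hmeas := measurableSet_convexConfigs n
  have hslice (X : ℝ × ℝ) : volume (Prod.mk X ⁻¹' firstVertexConfigs n) =
      (interior T).indicator (fun X ↦
        ENNReal.ofReal |(LinearMap.det (normalization X).linear)⁻¹| ^ n *
          volume (convexConfigs n)) X := by
    by_cases hX : X ∈ interior T
    · have : Prod.mk X ⁻¹' firstVertexConfigs n = (normalization X ∘ ·) ⁻¹' convexConfigs n := by
        ext Y
        exact and_iff_right hX
      rw [Set.indicator_of_mem hX, this, volume_pi,
        pi_preimage_comp_affineMap volume (det_normalization_linear_pos hX).ne' hmeas,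
        Fintype.card_fin]
    · have : Prod.mk X ⁻¹' firstVertexConfigs n = ∅ :=
        Set.eq_empty_of_forall_notMem fun Y hY ↦ hX hY.1
      rw [Set.indicator_of_notMem hX, this, measure_empty]
  rw [Measure.volume_eq_prod, Measure.prod_apply (measurableSet_firstVertexConfigs hmeas)]
  simp_rw [hslice]
  rw [lintegral_indicator measurableSet_interior, lintegral_mul_const,
    setLIntegral_interior_T_abs_inv_det_normalization_pow]
  simp only [det_normalization_linear]
  fun_prop

lemma volume_convexConfigs_succ (n : ℕ) : volume (convexConfigs (n + 1)) =
    ENNReal.ofReal (1 / ((n + 1) * (n + 2))) * volume (convexConfigs n) := by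
  have hmeas := measurableSet_firstVertexConfigs (measurableSet_convexConfigs n)
  calc volume (convexConfigs (n + 1))
      = ∑ i, volume (MeasurableEquiv.piFinSuccAbove (fun _ ↦ ℝ × ℝ) i ⁻¹'
          firstVertexConfigs n) := by
        rw [convexConfigs_succ, measure_iUnion (pairwise_disjoint_preimage_firstVertexConfigs n)
          fun i ↦ MeasurableEquiv.measurable _ hmeas, tsum_fintype]
    _ = ∑ _ : Fin (n + 1), volume (firstVertexConfigs n) :=
        Finset.sum_congr rfl fun i _ ↦
          (volume_preserving_piFinSuccAbove (fun _ ↦ ℝ × ℝ) i).measure_preimage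
            hmeas.nullMeasurableSet
    _ = ENNReal.ofReal ((n + 1) * (1 / ((n + 1) ^ 2 * (n + 2)))) * volume (convexConfigs n) := by
        rw [Fin.sum_const, nsmul_eq_mul, volume_firstVertexConfigs, ← mul_assoc,
          ← ENNReal.ofReal_natCast, ← ENNReal.ofReal_mul (by positivity), Nat.cast_succ]
    _ = ENNReal.ofReal (1 / ((n + 1) * (n + 2))) * volume (convexConfigs n) := by
        congr 2
        field_simp

lemma volume_convexConfigs (n : ℕ) : volume (convexConfigs n) =
    ENNReal.ofReal (1 / ((n.factorial : ℝ) * ((n + 1).factorial : ℝ))) := by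
  induction n with
  | zero =>
    have : convexConfigs 0 = Set.univ := by
      ext ω
      simp [convexConfigs, ConvexIndependentOver]
    rw [this, volume_pi, Measure.pi_univ]
    simp
  | succ n ih =>
    rw [volume_convexConfigs_succ, ih, ← ENNReal.ofReal_mul (by positivity),
      Nat.factorial_succ (n + 1), Nat.factorial_succ n]
    congr 1
    push_cast
    field_simp
    ring

end Volume

/-- `P(N_n = n) = 2^n / (n! (n+1)!)`. -/
theorem stmt16 (n : ℕ) (hn : 1 ≤ n) :
    (P n {ω | N n ω = n}).toReal
      = 2 ^ n / ((n.factorial : ℝ) * ((n + 1).factorial : ℝ)) := by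
  have hmeas : MeasurableSet (Set.univ.pi fun _ : Fin n ↦ interior T) :=
    .univ_pi fun _ ↦ measurableSet_interior
  have hevent : {ω | N n ω = n} ∩ (Set.univ.pi fun _ : Fin n ↦ interior T) = convexConfigs n := by
    ext ω
    rw [Set.mem_inter_iff, Set.mem_univ_pi, and_comm]
    exact and_congr_right N_eq_iff_convexIndependentOver
  rw [P_eq_smul_restrict, Measure.smul_apply, Measure.restrict_apply' hmeas, hevent,
    volume_convexConfigs, smul_eq_mul, ENNReal.toReal_mul, ENNReal.toReal_ofReal (by positivity)]
  simp [div_eq_mul_inv]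

end
end
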